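/- arXiv:2406.00740 — 4 statements merged into one kernel-verified Lean document; each statement's English description precedes it below -/
import Mathlib

section
/- If C is a chamber of F_q^c and S is a subspace of dimension s with S ∩ C_{c-s} = {0}, then the number of chambers of F_q^c that contain S (as their s-dimensional subspace) and are opposite to C is q^{binomial(s,2) + binomial(c-s,2)}. -/
/-!
The two halves of a chamber through `S` can be chosen independently. Put `A = C_{c-s}`, a complement
of `S`. The part of `g` below `S` is a full flag of `S` opposite to the trace
`i ↦ C_{c-s+i} ∩ S` of `C` on `S`. The part above `S` corresponds, through the lattice isomorphism
`[S, V] ≅ [0, A]`, `X ↦ X ∩ A`, to a full flag of `A` opposite to `(C_i)_{i ≤ c-s}`; by modularity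
both translations preserve opposition (`splitEquiv`).

It remains to count the full flags of an `n`-space opposite to a fixed one `h`, and there are
`q^{n choose 2}` of them (`card_isOppFlag`). By induction: the hyperplane `T = g_{n}` of an
`(n+1)`-space `A` is any complement of the line `h_1`, of which there are `q^n`
(`card_hyperplanes_avoiding_line`), and the rest of `g` is a flag of `T` opposite to the trace
`i ↦ h_{i+1} ∩ T`. All subspaces live in one ambient space `V`, so that no quotients are needed.
-/

open Module Finset
open scoped Classical

/-- A chamber of a `c`-dimensional vector space, encoded as an increasing chain
`f : ℕ → Submodule K V` with `finrank (f i) = i` for `i ≤ c` and `f i = ⊤` for `i ≥ c`. -/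
def IsChamber (K : Type*) {V : Type*} [Field K] [AddCommGroup V] [Module K V]
    (c : ℕ) (f : ℕ → Submodule K V) : Prop :=
  Monotone f ∧ (∀ i ≤ c, Module.finrank K (f i) = i) ∧ ∀ i, c ≤ i → f i = ⊤

/-- The type of chambers of `V`, `dim V = c`. -/
abbrev Chamber (K V : Type*) [Field K] [AddCommGroup V] [Module K V] (c : ℕ) :=
  {f : ℕ → Submodule K V // IsChamber K c f}

/-- Two chambers are opposite if `C_i ∩ D_{c-i} = 0` for `1 ≤ i ≤ c - 1`. -/
def OppositeChambers (K : Type*) {V : Type*} [Field K] [AddCommGroup V] [Module K V]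
    (c : ℕ) (f g : ℕ → Submodule K V) : Prop :=
  ∀ i, 1 ≤ i → i ≤ c - 1 → f i ⊓ g (c - i) = ⊥

/-- `z_c(q) = ∏_{i=1}^c (q^i - 1) / (q-1)`, the number of chambers of `𝔽_q^c`. -/
def zNat (q c : ℕ) : ℕ := (∏ i ∈ Finset.Icc 1 c, (q ^ i - 1)) / (q - 1) ^ c

/-- The Gaussian binomial coefficient `[b choose a]_q`. -/
def gaussNat (q b a : ℕ) : ℕ :=
  (∏ i ∈ Finset.Icc 1 a, (q ^ (b - a + i) - 1)) / ∏ i ∈ Finset.Icc 1 a, (q ^ i - 1)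

section Aux

variable {K V : Type*} [Field K] [AddCommGroup V] [Module K V]

/-- `g` is a full flag of the `n`-dimensional subspace `A` (constant equal to `A` from index `n`
on), opposite to the flag `h`; only the values `h 0, …, h n` matter. -/
def IsOppFlag (n : ℕ) (A : Submodule K V) (h g : ℕ → Submodule K V) : Prop :=
  Monotone g ∧ (∀ i ≤ n, finrank K (g i) = i) ∧ (∀ i, n ≤ i → g i = A) ∧
    ∀ i ≤ n, h (n - i) ⊓ g i = ⊥

/-- The complements of `p` form an affine space over `Hom(E/p, p)`, realised here by projections
onto `p`, which are determined by their restriction to one fixed complement `W`. -/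
lemma card_isCompl [Finite K] [FiniteDimensional K V] (p : Submodule K V) :
    Nat.card {T : Submodule K V // IsCompl p T} =
      Nat.card K ^ ((finrank K V - finrank K p) * finrank K p) := by
  obtain ⟨W, hW⟩ := p.exists_isCompl
  have e : {f : V →ₗ[K] p // ∀ x : p, f x = x} ≃ (W →ₗ[K] p) :=
    { toFun := fun f => f.1.domRestrict W
      invFun := fun u => ⟨LinearMap.ofIsCompl hW LinearMap.id u, fun x => by
        simp [LinearMap.ofIsCompl_apply_left]⟩
      left_inv := fun f => Subtype.ext (LinearMap.ofIsCompl_eq hW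
        (fun x => (f.2 x).symm) (fun x => rfl))
      right_inv := fun u => by
        ext x
        simp [LinearMap.ofIsCompl_apply_right] }
  have hd := Submodule.finrank_add_eq_of_isCompl hW
  rw [Nat.card_congr (p.isComplEquivProj.trans e), Module.natCard_eq_pow_finrank (K := K),
    Module.finrank_linearMap]
  congr 2
  omega

lemma card_hyperplanes_avoiding_line [Finite K] [FiniteDimensional K V] (n : ℕ)
    (A L : Submodule K V) (hA : finrank K A = n + 1) (hL : finrank K L = 1) (hLA : L ≤ A) :
    Nat.card {T : Submodule K V // T ≤ A ∧ finrank K T = n ∧ L ⊓ T = ⊥} = Nat.card K ^ n := by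
  have hL' : finrank K (L.comap A.subtype) = 1 := by
    rw [← Submodule.finrank_map_subtype_eq, Submodule.map_comap_subtype,
      inf_eq_right.2 hLA, hL]
  have hmap : ∀ T : Submodule K A,
      (L.comap A.subtype ⊓ T).map A.subtype = L ⊓ T.map A.subtype := by
    intro T
    rw [Submodule.map_inf _ A.injective_subtype, Submodule.map_comap_subtype,
      inf_eq_right.2 hLA]
  have key : ∀ T : Submodule K A, IsCompl (L.comap A.subtype) T ↔
      finrank K (T.map A.subtype) = n ∧ L ⊓ T.map A.subtype = ⊥ := by
    intro T
    rw [← hmap, Submodule.finrank_map_subtype_eq,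
      (Submodule.map_injective_of_injective A.injective_subtype).eq_iff' (Submodule.map_bot _)]
    constructor
    · intro h
      have := Submodule.finrank_add_eq_of_isCompl h
      exact ⟨by omega, h.inf_eq_bot⟩
    · rintro ⟨h1, h2⟩
      exact (Submodule.isCompl_iff_disjoint _ _ (by omega)).2 (disjoint_iff.2 h2)
  have e : {T : Submodule K A // IsCompl (L.comap A.subtype) T} ≃
      {T : Submodule K V // T ≤ A ∧ finrank K T = n ∧ L ⊓ T = ⊥} :=
    { toFun := fun T => ⟨T.1.map A.subtype, Submodule.map_subtype_le _ _, (key _).1 T.2⟩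
      invFun := fun T => ⟨T.1.comap A.subtype, (key _).2 (by
        rw [Submodule.map_comap_subtype, inf_eq_right.2 T.2.1]
        exact T.2.2)⟩
      left_inv := fun T => Subtype.ext
        (Submodule.comap_map_eq_of_injective A.injective_subtype _)
      right_inv := fun T => Subtype.ext (by
        simp only [Submodule.map_comap_subtype, inf_eq_right.2 T.2.1]) }
  rw [← Nat.card_congr e, card_isCompl, hA, hL']
  simp

/-- If `L` and `T` are complementary inside `A`, then every `X` with `L ≤ X ≤ A` is the direct sum
of `L` and `X ∩ T`. -/
lemma sup_inf_eq_and_finrank [FiniteDimensional K V] {L T X A : Submodule K V}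
    (hTA : T ≤ A) (hXA : X ≤ A) (hLX : L ≤ X) (h : L ⊓ T = ⊥)
    (hd : finrank K L + finrank K T = finrank K A) :
    L ⊔ X ⊓ T = X ∧ finrank K L + finrank K (X ⊓ T : Submodule K V) = finrank K X := by
  have h1 := Submodule.finrank_sup_add_finrank_inf_eq L T
  rw [h, finrank_bot] at h1
  have h2 : L ⊔ T = A :=
    Submodule.eq_of_le_of_finrank_eq (sup_le (hLX.trans hXA) hTA) (by omega)
  have h3 : L ⊔ X ⊓ T = X := by
    rw [inf_comm, ← sup_inf_assoc_of_le T hLX, h2, inf_eq_right.2 hXA]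
  refine ⟨h3, ?_⟩
  have h4 := Submodule.finrank_sup_add_finrank_inf_eq L (X ⊓ T)
  have h5 : L ⊓ (X ⊓ T) = ⊥ := le_bot_iff.1 (h ▸ inf_le_inf_left L inf_le_right)
  rw [h3, h5, finrank_bot] at h4
  omega

/-- A flag of an `(n+1)`-space opposite to `h` is a hyperplane `T` avoiding the line `h 1`
together with a flag of `T` opposite to the trace of `h` on `T`. -/
def oppFlagSuccEquiv (n : ℕ) (A : Submodule K V) [FiniteDimensional K V] (h : ℕ → Submodule K V)
    (hA : finrank K A = n + 1) (h0 : h 0 = ⊥) :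
    {g : ℕ → Submodule K V // IsOppFlag (n + 1) A h g} ≃
      Σ T : {T : Submodule K V // T ≤ A ∧ finrank K T = n ∧ h 1 ⊓ T = ⊥},
        {g : ℕ → Submodule K V // IsOppFlag n T.1 (fun i => h (i + 1) ⊓ T.1) g} where
  toFun g := ⟨⟨g.1 n, by
      have := g.2.1 (Nat.le_succ n)
      rwa [g.2.2.2.1 (n + 1) le_rfl] at this, g.2.2.1 n (by omega), by
      have := g.2.2.2.2 n (by omega)
      rwa [show n + 1 - n = 1 by omega] at this⟩,
    fun i => g.1 (min i n), fun i j hij => g.2.1 (by omega), fun i hi => by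
      change finrank K (g.1 (min i n)) = i
      rw [min_eq_left hi]; exact g.2.2.1 i (by omega), fun i hi => by
      change g.1 (min i n) = g.1 n
      rw [min_eq_right hi], fun i hi => by
      have := g.2.2.2.2 i (by omega)
      rw [show n + 1 - i = n - i + 1 by omega] at this
      simp only [min_eq_left hi]
      exact le_bot_iff.1 (this ▸ inf_le_inf_right _ inf_le_left)⟩
  invFun p := ⟨fun i => if i ≤ n then p.2.1 i else A, by
      obtain ⟨⟨T, hTA, hT, hhT⟩, g, hg1, hg2, hg3, hg4⟩ := p
      have hle : ∀ i, g i ≤ T := fun i =>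
        (hg1 (le_max_left i n)).trans_eq (hg3 (max i n) (le_max_right _ _))
      refine ⟨fun i j hij => ?_, fun i hi => ?_, fun i hi => ?_, fun i hi => ?_⟩
      · dsimp only
        split_ifs with h1 h2
        · exact hg1 hij
        · exact (hle i).trans hTA
        · omega
        · exact le_rfl
      · change finrank K (if i ≤ n then g i else A : Submodule K V) = i
        by_cases h1 : i ≤ n
        · rw [if_pos h1, hg2 i h1]
        · rw [if_neg h1, hA]; omega
      · exact if_neg (by omega)
      · dsimp only
        split_ifs with h1
        · have : (h (n - i + 1) ⊓ T) ⊓ g i = ⊥ := hg4 i h1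
          rw [show n + 1 - i = n - i + 1 by omega]
          rwa [inf_assoc, inf_eq_right.2 (hle i)] at this
        · rw [show n + 1 - i = 0 by omega, h0, bot_inf_eq]⟩
  left_inv g := by
    apply Subtype.ext
    funext i
    dsimp only
    split_ifs with h1
    · rw [min_eq_left h1]
    · exact (g.2.2.2.1 i (by omega)).symm
  right_inv p := by
    obtain ⟨⟨T, hTA, hT, hhT⟩, g, hg1, hg2, hg3, hg4⟩ := p
    apply Sigma.subtype_ext
    · apply Subtype.ext
      simpa using hg3 n le_rfl
    · funext i
      dsimp only
      rw [if_pos (min_le_right _ _)]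
      rcases le_total i n with h1 | h1
      · rw [min_eq_left h1]
      · rw [min_eq_right h1, hg3 n le_rfl, hg3 i h1]

/-- An `n`-space over a field with `q` elements has `q^{n choose 2}` full flags opposite to a given
full flag. -/
lemma card_isOppFlag [Finite K] [FiniteDimensional K V] (n : ℕ) :
    ∀ (A : Submodule K V) (h : ℕ → Submodule K V), Monotone h →
      (∀ i ≤ n, finrank K (h i) = i) → h n = A →
      Nat.card {g : ℕ → Submodule K V // IsOppFlag n A h g} = Nat.card K ^ n.choose 2 := by
  have hq : Nat.card K ≠ 0 := Nat.card_pos.ne'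
  induction n with
  | zero =>
    intro A h hm hd hA
    have h0 : A = ⊥ := by
      rw [← Submodule.finrank_eq_zero (R := K), ← hA, hd 0 le_rfl]
    have : Unique {g : ℕ → Submodule K V // IsOppFlag 0 A h g} :=
      { default := ⟨fun _ => A, monotone_const, fun i hi => by
          rw [h0, finrank_bot]; omega, fun _ _ => rfl, fun i hi => by simp [h0]⟩
        uniq := fun g => Subtype.ext (funext fun i => g.2.2.2.1 i (Nat.zero_le i)) }
    simp
  | succ n ih =>
    intro A h hm hd hA
    have hdA : finrank K A = n + 1 := by rw [← hA, hd _ le_rfl]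
    have hle : ∀ i ≤ n, h (i + 1) ≤ A := fun i hi => hA ▸ hm (by omega)
    have h0 : h 0 = ⊥ := by
      rw [← Submodule.finrank_eq_zero (R := K), hd 0 (by omega)]
    have hbase := card_hyperplanes_avoiding_line n A (h 1) hdA (hd 1 (by omega))
      (hle 0 (by omega))
    have : Finite {T : Submodule K V // T ≤ A ∧ finrank K T = n ∧ h 1 ⊓ T = ⊥} :=
      Nat.finite_of_card_ne_zero (by rw [hbase]; exact pow_ne_zero _ hq)
    have := Fintype.ofFinite {T : Submodule K V // T ≤ A ∧ finrank K T = n ∧ h 1 ⊓ T = ⊥}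
    have hfib : ∀ T : {T : Submodule K V // T ≤ A ∧ finrank K T = n ∧ h 1 ⊓ T = ⊥},
        Nat.card {g : ℕ → Submodule K V // IsOppFlag n T.1 (fun i => h (i + 1) ⊓ T.1) g} =
          Nat.card K ^ n.choose 2 := by
      rintro ⟨T, hTA, hT, hhT⟩
      refine ih T _ (fun i j hij => inf_le_inf_right _ (hm (by omega))) (fun i hi => ?_) ?_
      · have h1 := hd 1 (by omega)
        have := (sup_inf_eq_and_finrank hTA (hle i hi) (hm (by omega : 1 ≤ i + 1)) hhT
          (by rw [h1, hT, hdA, add_comm])).2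
        rw [h1, hd (i + 1) (by omega)] at this
        dsimp only
        omega
      · dsimp only
        rw [hA, inf_eq_right.2 hTA]
    have : ∀ T : {T : Submodule K V // T ≤ A ∧ finrank K T = n ∧ h 1 ⊓ T = ⊥},
        Finite {g : ℕ → Submodule K V // IsOppFlag n T.1 (fun i => h (i + 1) ⊓ T.1) g} :=
      fun T => Nat.finite_of_card_ne_zero (by rw [hfib]; exact pow_ne_zero _ hq)
    rw [Nat.card_congr (oppFlagSuccEquiv n A h hdA h0), Nat.card_sigma]
    simp only [hfib, Finset.sum_const, Finset.card_univ, smul_eq_mul]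
    rw [← Nat.card_eq_fintype_card, hbase, ← pow_add, Nat.choose_succ_succ' n 1,
      Nat.choose_one_right]

/-- A chamber through `S` opposite to `f` is a flag of `S` opposite to the trace of `f` on `S`,
together with a flag of the complement `f (c - s)` of `S` opposite to the initial part of `f`. -/
def splitEquiv [FiniteDimensional K V] (c s : ℕ) (hs : s ≤ c) (hV : finrank K V = c)
    (f : ℕ → Submodule K V) (hf : IsChamber K c f)
    (S : Submodule K V) (hSdim : finrank K S = s) (hSf : S ⊓ f (c - s) = ⊥) :
    {g : ℕ → Submodule K V // IsChamber K c g ∧ g s = S ∧ OppositeChambers K c f g} ≃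
      {g : ℕ → Submodule K V // IsOppFlag s S (fun i => f (c - s + i) ⊓ S) g} ×
      {g : ℕ → Submodule K V // IsOppFlag (c - s) (f (c - s)) f g} where
  toFun g := by
    refine ⟨⟨fun i => g.1 (min i s), ?_⟩, ⟨fun i => g.1 (s + i) ⊓ f (c - s), ?_⟩⟩
    all_goals
      obtain ⟨g, ⟨hm, hd, ht⟩, hgS, ho⟩ := g
      have hopp : ∀ i ≤ c, f i ⊓ g (c - i) = ⊥ := by
        intro i hi
        rcases Nat.eq_zero_or_pos i with rfl | h1
        · rw [Submodule.finrank_eq_zero.1 (hf.2.1 0 hi), bot_inf_eq]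
        rcases Nat.eq_or_lt_of_le hi with rfl | h2
        · rw [Nat.sub_self, Submodule.finrank_eq_zero.1 (hd 0 (by omega)), inf_bot_eq]
        exact ho i h1 (by omega)
    · refine ⟨fun i j hij => hm (by omega), fun i hi => ?_, fun i hi => ?_, fun i hi => ?_⟩
      · change finrank K (g (min i s)) = i
        rw [min_eq_left hi, hd i (by omega)]
      · dsimp only
        rw [min_eq_right hi, hgS]
      · have := hopp (c - i) (by omega)
        rw [show c - (c - i) = i by omega] at this
        dsimp only
        rw [min_eq_left hi, show c - s + (s - i) = c - i by omega]
        exact le_bot_iff.1 (this ▸ inf_le_inf_right _ inf_le_left)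
    · refine ⟨fun i j hij => inf_le_inf_right _ (hm (by omega)), fun i hi => ?_,
        fun i hi => ?_, fun i hi => ?_⟩
      · have := (sup_inf_eq_and_finrank (A := ⊤) (X := g (s + i)) le_top le_top
          (hgS ▸ hm (by omega : s ≤ s + i)) hSf
          (by rw [hSdim, hf.2.1 _ (by omega), finrank_top, hV]; omega)).2
        rw [hSdim, hd _ (by omega)] at this
        dsimp only
        omega
      · dsimp only
        rw [ht _ (by omega), top_inf_eq]
      · have := hopp (c - s - i) (by omega)
        rw [show c - (c - s - i) = s + i by omega] at this
        exact le_bot_iff.1 (this ▸ inf_le_inf_left _ inf_le_left)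
  invFun p := ⟨fun i => if i ≤ s then p.1.1 i else p.2.1 (i - s) ⊔ S, by
    obtain ⟨⟨a, ha1, ha2, ha3, ha4⟩, ⟨b, hb1, hb2, hb3, hb4⟩⟩ := p
    have hale : ∀ i, a i ≤ S := fun i => by
      rw [← ha3 (max i s) (le_max_right _ _)]
      exact ha1 (le_max_left _ _)
    have hble : ∀ i, b i ≤ f (c - s) := fun i => by
      rw [← hb3 (max i (c - s)) (le_max_right _ _)]
      exact hb1 (le_max_left _ _)
    refine ⟨⟨fun i j hij => ?_, fun i hi => ?_, fun i hi => ?_⟩, ?_, fun i h1 h2 => ?_⟩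
    · dsimp only
      split_ifs with h1 h2
      · exact ha1 hij
      · exact (hale i).trans le_sup_right
      · omega
      · exact sup_le_sup_right (hb1 (by omega)) _
    · change finrank K (if i ≤ s then a i else b (i - s) ⊔ S : Submodule K V) = i
      by_cases h1 : i ≤ s
      · rw [if_pos h1, ha2 i h1]
      · rw [if_neg h1]
        have hi' := Submodule.finrank_sup_add_finrank_inf_eq (b (i - s)) S
        have hz : b (i - s) ⊓ S = ⊥ :=
          le_bot_iff.1 (by rw [← hSf, inf_comm]; exact inf_le_inf_left _ (hble _))
        rw [hz, finrank_bot, hb2 _ (by omega), hSdim] at hi'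
        omega
    · have htop : f (c - s) ⊔ S = ⊤ := by
        rw [sup_comm]
        simpa using (sup_inf_eq_and_finrank (A := ⊤) (X := ⊤) le_top le_top le_top hSf
          (by rw [hSdim, hf.2.1 _ (by omega), finrank_top, hV]; omega)).1
      dsimp only
      split_ifs with h1
      -- Here `i = s = c`, so the chamber consists of its lower half alone.
      · obtain rfl : i = c := by omega
        obtain rfl : s = i := by omega
        rw [ha3 s le_rfl]
        exact Submodule.eq_top_of_finrank_eq (by omega)
      · rw [hb3 _ (by omega), htop]
    · dsimp only
      rw [if_pos le_rfl, ha3 s le_rfl]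
    · dsimp only
      split_ifs with h3
      · have : (f (c - s + (s - (c - i))) ⊓ S) ⊓ a (c - i) = ⊥ := ha4 (c - i) h3
        rw [show c - s + (s - (c - i)) = i by omega, inf_assoc,
          inf_eq_right.2 (hale _)] at this
        exact this
      · have := hb4 (c - i - s) (by omega)
        rw [show c - s - (c - i - s) = i by omega] at this
        have hfi : f i ≤ f (c - s) := hf.1 (by omega)
        -- Modularity: `(b + S) ∩ f (c - s) = b`, since `b ≤ f (c - s)`.
        have hmod : (b (c - i - s) ⊔ S) ⊓ f (c - s) = b (c - i - s) := by
          rw [sup_inf_assoc_of_le S (hble _), hSf, sup_bot_eq]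
        rw [← inf_eq_left.2 hfi, inf_assoc, inf_comm (f (c - s)), hmod]
        exact this⟩
  left_inv g := by
    obtain ⟨g, ⟨hm, hd, ht⟩, hgS, ho⟩ := g
    apply Subtype.ext
    funext i
    dsimp only
    split_ifs with h1
    · rw [min_eq_left h1]
    · rw [show s + (i - s) = i by omega, sup_comm]
      exact (sup_inf_eq_and_finrank (A := ⊤) (X := g i) le_top le_top
          (hgS ▸ hm (by omega : s ≤ i)) hSf
          (by rw [hSdim, hf.2.1 _ (by omega), finrank_top, hV]; omega)).1
  right_inv p := by
    obtain ⟨⟨a, ha1, ha2, ha3, ha4⟩, ⟨b, hb1, hb2, hb3, hb4⟩⟩ := p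
    have hble : ∀ i, b i ≤ f (c - s) := fun i => by
      rw [← hb3 (max i (c - s)) (le_max_right _ _)]
      exact hb1 (le_max_left _ _)
    refine Prod.ext (Subtype.ext (funext fun i => ?_)) (Subtype.ext (funext fun i => ?_))
    · dsimp only
      rw [if_pos (min_le_right _ _)]
      rcases le_total i s with h1 | h1
      · rw [min_eq_left h1]
      · rw [min_eq_right h1, ha3 s le_rfl, ha3 i h1]
    · dsimp only
      split_ifs with h1
      · obtain rfl : i = 0 := by omega
        rw [add_zero, ha3 s le_rfl, hSf, Submodule.finrank_eq_zero.1 (hb2 0 (by omega))]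
      · rw [show s + i - s = i by omega, sup_inf_assoc_of_le S (hble _), hSf, sup_bot_eq]

end Aux

/-- if `C` is a chamber of `𝔽_q^c` and `S` an `s`-subspace with `S ∩ C_{c-s} = 0`,
then exactly `q^{C(s,2)+C(c-s,2)}` chambers contain `S` and are opposite to `C`. -/
theorem card_opposite_chambers_through_subspace (q c s : ℕ) (hs : s ≤ c)
    (K V : Type*) [Field K] [Fintype K]
    [AddCommGroup V] [Module K V] [FiniteDimensional K V]
    (hK : Fintype.card K = q) (hV : Module.finrank K V = c)
    (f : ℕ → Submodule K V) (hf : IsChamber K c f)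
    (S : Submodule K V) (hSdim : Module.finrank K S = s) (hSf : S ⊓ f (c - s) = ⊥) :
    Nat.card {g : ℕ → Submodule K V //
        IsChamber K c g ∧ g s = S ∧ OppositeChambers K c f g} =
      q ^ (s.choose 2 + (c - s).choose 2) := by
  subst hK
  have hdim : ∀ i ≤ s, finrank K (f (c - s + i) ⊓ S : Submodule K V) = i := by
    intro i hi
    have := (sup_inf_eq_and_finrank (A := ⊤) (X := f (c - s + i)) (T := S) le_top le_top
      (hf.1 (by omega : c - s ≤ c - s + i)) (by rw [inf_comm, hSf])
      (by rw [hSdim, hf.2.1 _ (by omega), finrank_top, hV]; omega)).2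
    rw [hf.2.1 _ (by omega), hf.2.1 _ (by omega)] at this
    omega
  rw [Nat.card_congr (splitEquiv c s hs hV f hf S hSdim hSf), Nat.card_prod,
    card_isOppFlag s S (fun i => f (c - s + i) ⊓ S)
      (fun i j hij => inf_le_inf_right _ (hf.1 (by omega))) hdim
      (by rw [hf.2.2 _ (by omega), top_inf_eq]),
    card_isOppFlag (c - s) _ f hf.1 (fun i hi => hf.2.1 i (by omega)) rfl,
    ← pow_add, Nat.card_eq_fintype_card]
end

section
/- Let S be a t-fold n-spread of F_q^{2n} and v_S the 0/1-function on chambers of F_q^{2n} that is 1 exactly on chambers whose n-dimensional subspace lies in S. Then for every one-dimensional subspace P and every i ∈ {1,...,n}, the inner product v_Sᵀ χ^i_P = 0, where χ^i_P(C) = q^i if P ≤ C_n and P ≰ C_{n-i}, χ^i_P(C) = -1 if P ≤ C_{n+i} and P ≰ C_n, and χ^i_P(C) = 0 otherwise. -/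
/-!
For an `n`-space `U` and a vector `v`, let `F(U, v)` be the sum of `χ^i_{⟨v⟩}` over the chambers
whose `n`-space is `U`. The group `GL(V)` acts on chambers and is transitive on the pairs `(U, v)`
with `0 ≠ v ∈ U`, and on those with `v ∉ U` (`exists_linearEquiv_map_eq`). Hence `F(U, v)` takes one
value `a` on the former and one value `b` on the latter (`chiSum_map`), and no chamber has to be
counted. For a fixed chamber, the values `χ^i_{⟨v⟩}(C)` sum to zero over all `v` (`sum_chi_vec`), so
`(q^n - 1) a + (q^{2n} - q^n) b = 0`, that is, `a + q^n b = 0`. A nonzero `v` lies in `t` of the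
`t (q^n + 1)` members of `S`, so the inner product is `t a + t q^n b = 0`.
-/

open Module Finset
open scoped Classical

section Transitivity

variable {K V V' : Type*} [Field K] [AddCommGroup V] [Module K V]
  [AddCommGroup V'] [Module K V']

lemma map_eq_of_restrict {U U' : Submodule K V} (f : U ≃ₗ[K] U') (g : V ≃ₗ[K] V)
    (h : ∀ x : U, g x = f x) : U.map (g : V →ₗ[K] V) = U' := by
  ext x
  constructor
  · rintro ⟨y, hy, rfl⟩
    have := h ⟨y, hy⟩
    simp only at this
    simp [this]
  · intro hx
    refine ⟨f.symm ⟨x, hx⟩, (f.symm ⟨x, hx⟩).2, ?_⟩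
    simp [h]

variable [FiniteDimensional K V] [FiniteDimensional K V']

lemma exists_linearEquiv_apply_eq (h : finrank K V = finrank K V') {v : V} {w : V'}
    (hv : v ≠ 0) (hw : w ≠ 0) : ∃ e : V ≃ₗ[K] V', e v = w := by
  let e₀ : V ≃ₗ[K] V' := LinearEquiv.ofFinrankEq V V' h
  have hv' : e₀ v ≠ 0 := by simpa using hv
  obtain ⟨g, hg⟩ := Submodule.exists_linearEquiv_restrict_eq
    ((LinearEquiv.toSpanNonzeroSingleton K V' (e₀ v) hv').symm ≪≫ₗ
      LinearEquiv.toSpanNonzeroSingleton K V' w hw)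
  refine ⟨e₀ ≪≫ₗ g, ?_⟩
  have h1 := hg (LinearEquiv.toSpanNonzeroSingleton K V' (e₀ v) hv' 1)
  simp only [LinearEquiv.trans_apply, LinearEquiv.symm_apply_apply] at h1
  simpa [LinearEquiv.toSpanNonzeroSingleton] using h1.symm

/-- `GL(V)` is transitive on the pairs `(U, v)` with `dim U` fixed and `0 ≠ v ∈ U`, and on those
with `v ∉ U`. -/
lemma exists_linearEquiv_map_eq {U U' : Submodule K V} (hU : finrank K U = finrank K U') {v w : V}
    (hv : v ≠ 0) (hw : w ≠ 0) (hvw : v ∈ U ↔ w ∈ U') :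
    ∃ g : V ≃ₗ[K] V, U.map (g : V →ₗ[K] V) = U' ∧ g v = w := by
  by_cases hvU : v ∈ U
  · obtain ⟨f, hf⟩ := exists_linearEquiv_apply_eq hU (v := ⟨v, hvU⟩) (w := ⟨w, hvw.1 hvU⟩)
      (by simpa using hv) (by simpa using hw)
    obtain ⟨g, hg⟩ := Submodule.exists_linearEquiv_restrict_eq f
    refine ⟨g, map_eq_of_restrict f g fun x => (hg x).symm, ?_⟩
    have := hg ⟨v, hvU⟩
    rw [hf] at this
    exact this.symm
  · have hwU : w ∉ U' := fun h => hvU (hvw.2 h)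
    -- Choose complements of `U` and `U'` containing `v` and `w`.
    obtain ⟨W, hvW, hW⟩ := ((Submodule.disjoint_span_singleton' hv).2 hvU).symm.exists_isCompl
    obtain ⟨W', hwW, hW'⟩ := ((Submodule.disjoint_span_singleton' hw).2 hwU).symm.exists_isCompl
    rw [Submodule.span_singleton_le_iff_mem] at hvW hwW
    have hdim : finrank K W = finrank K W' := by
      have h1 := Submodule.finrank_add_eq_of_isCompl hW
      have h2 := Submodule.finrank_add_eq_of_isCompl hW'
      omega
    obtain ⟨f, hf⟩ := exists_linearEquiv_apply_eq hdim (v := ⟨v, hvW⟩) (w := ⟨w, hwW⟩)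
      (by simpa using hv) (by simpa using hw)
    let f₀ : U ≃ₗ[K] U' := LinearEquiv.ofFinrankEq U U' hU
    let g : V ≃ₗ[K] V := (W.prodEquivOfIsCompl U hW).symm ≪≫ₗ (LinearEquiv.prodCongr f f₀) ≪≫ₗ
      W'.prodEquivOfIsCompl U' hW'
    refine ⟨g, map_eq_of_restrict f₀ g fun x => ?_, ?_⟩
    · simp [g]
    · have := Submodule.prodEquivOfIsCompl_symm_apply_left W U hW ⟨v, hvW⟩
      simp only at this
      simp [g, this, hf]

end Transitivity

section ChamberSums

variable {K V : Type*} [Field K] [AddCommGroup V] [Module K V]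

lemma IsChamber.map {c : ℕ} {f : ℕ → Submodule K V} (hf : IsChamber K c f) (g : V ≃ₗ[K] V) :
    IsChamber K c fun j => (f j).map (g : V →ₗ[K] V) := by
  refine ⟨fun i j h => Submodule.map_mono (hf.1 h), fun i hi => ?_, fun i hi => ?_⟩
  · exact (LinearEquiv.finrank_map_eq g (f i)).trans (hf.2.1 i hi)
  · simp [hf.2.2 i hi]

/-- The action of a linear automorphism on chambers. -/
def chamberEquiv (c : ℕ) (g : V ≃ₗ[K] V) : Chamber K V c ≃ Chamber K V c where
  toFun C := ⟨_, C.2.map g⟩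
  invFun C := ⟨_, C.2.map g.symm⟩
  left_inv C := by
    ext j x
    simp
  right_inv C := by
    ext j x
    simp

/-- The value `χ^i_P(C)` for `P` spanned by `v`; it is `0` for `v = 0`. -/
noncomputable def chi (q n i : ℕ) (v : V) (f : ℕ → Submodule K V) : ℚ :=
  if v ∈ f n ∧ v ∉ f (n - i) then (q : ℚ) ^ i else if v ∈ f (n + i) ∧ v ∉ f n then -1 else 0

/-- The sum of `χ^i_{⟨v⟩}` over the chambers whose `n`-dimensional member is `U`. -/
noncomputable def chiSum (q n i : ℕ) [Fintype (Chamber K V (2 * n))] (U : Submodule K V) (v : V) : ℚ :=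
  ∑ C : Chamber K V (2 * n), if C.1 n = U then chi q n i v C.1 else 0

lemma chiSum_map (q n i : ℕ) [Fintype (Chamber K V (2 * n))] (g : V ≃ₗ[K] V)
    (U : Submodule K V) (v : V) :
    chiSum q n i (U.map (g : V →ₗ[K] V)) (g v) = chiSum q n i U v := by
  unfold chiSum
  symm
  apply Fintype.sum_equiv (chamberEquiv (2 * n) g)
  intro C
  have hinj : Function.Injective (Submodule.map (g : V →ₗ[K] V)) :=
    Submodule.map_injective_of_injective g.injective
  simp [chamberEquiv, chi, hinj.eq_iff]

lemma chiSum_zero (q n i : ℕ) [Fintype (Chamber K V (2 * n))] (U : Submodule K V) :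
    chiSum q n i U 0 = 0 := by
  simp [chiSum, chi]

lemma sum_indicator_mem [Fintype K] [Fintype V] (W : Submodule K V) :
    ∑ v : V, (if v ∈ W then (1 : ℚ) else 0) = (Fintype.card K : ℚ) ^ finrank K W := by
  rw [Finset.sum_boole, ← Nat.cast_pow, ← Module.card_eq_pow_finrank (V := W),
    Fintype.card_subtype]

lemma sum_chi_vec [Fintype K] [Fintype V] {q n i : ℕ} (hq : Fintype.card K = q) (hin : i ≤ n)
    {f : ℕ → Submodule K V} (hf : IsChamber K (2 * n) f) : ∑ v : V, chi q n i v f = 0 := by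
  have key : ∀ v : V, chi q n i v f =
      (q : ℚ) ^ i * ((if v ∈ f n then 1 else 0) - if v ∈ f (n - i) then 1 else 0)
        - ((if v ∈ f (n + i) then 1 else 0) - if v ∈ f n then 1 else 0) := by
    intro v
    have h1 : v ∈ f (n - i) → v ∈ f n := fun h => hf.1 (Nat.sub_le n i) h
    have h2 : v ∈ f n → v ∈ f (n + i) := fun h => hf.1 (Nat.le_add_right n i) h
    unfold chi
    by_cases hc : v ∈ f n
    · by_cases ha : v ∈ f (n - i) <;> simp [ha, hc, h2 hc]
    · have ha : v ∉ f (n - i) := fun h => hc (h1 h)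
      by_cases hb : v ∈ f (n + i) <;> simp [ha, hc, hb]
  simp only [key, Finset.sum_sub_distrib, ← Finset.mul_sum, sum_indicator_mem]
  rw [hf.2.1 n (by omega), hf.2.1 (n - i) (by omega), hf.2.1 (n + i) (by omega), hq, mul_sub,
    ← pow_add, ← pow_add, Nat.add_sub_cancel' hin, add_comm i n, sub_self]

lemma sum_chiSum_vec [Fintype K] [Fintype V] {q n i : ℕ} [Fintype (Chamber K V (2 * n))]
    (hq : Fintype.card K = q) (hin : i ≤ n) (U : Submodule K V) :
    ∑ v : V, chiSum q n i U v = 0 := by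
  unfold chiSum
  rw [Finset.sum_comm]
  refine Finset.sum_eq_zero fun C _ => ?_
  by_cases h : C.1 n = U
  · simp only [h, if_true]
    exact sum_chi_vec hq hin C.2
  · simp [h]

end ChamberSums

/-- for a `t`-fold `n`-spread `S` of `𝔽_q^{2n}`, the indicator of chambers
whose `n`-subspace lies in `S` is orthogonal to every `χ^i_P`. -/
theorem spread_antidesign (q n t : ℕ) (hn : 1 ≤ n) (K V : Type*) [Field K] [Fintype K]
    [AddCommGroup V] [Module K V] [FiniteDimensional K V]
    (hK : Fintype.card K = q) (hV : Module.finrank K V = 2 * n)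
    [Fintype (Chamber K V (2 * n))]
    (S : Set (Submodule K V)) (hSdim : ∀ U ∈ S, Module.finrank K U = n)
    (hSspread : ∀ P : Submodule K V, Module.finrank K P = 1 →
      Nat.card {U : Submodule K V // U ∈ S ∧ P ≤ U} = t)
    (P : Submodule K V) (hP : Module.finrank K P = 1)
    (i : ℕ) (hi1 : 1 ≤ i) (hin : i ≤ n) :
    ∑ C : Chamber K V (2 * n),
        (if C.1 n ∈ S then (1 : ℚ) else 0) *
          (if P ≤ C.1 n ∧ ¬ P ≤ C.1 (n - i) then (q : ℚ) ^ i
            else if P ≤ C.1 (n + i) ∧ ¬ P ≤ C.1 n then -1 else 0) = 0 := by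

  have : Finite V := Module.finite_of_finite K
  let _ : Fintype V := Fintype.ofFinite V
  let _ : Fintype (Submodule K V) := Fintype.ofFinite _
  obtain ⟨v, hv, rfl⟩ : ∃ v : V, v ≠ 0 ∧ K ∙ v = P := by
    obtain ⟨v, hvP, hv⟩ := Submodule.exists_mem_ne_zero_of_ne_bot
      (p := P) (by rintro rfl; simp at hP)
    exact ⟨v, hv, Submodule.eq_of_le_of_finrank_eq
      ((Submodule.span_singleton_le_iff_mem v P).2 hvP) ((finrank_span_singleton hv).trans hP.symm)⟩
  set T : Finset (Submodule K V) := univ.filter (· ∈ S) with hT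
  have hTdim : ∀ U ∈ T, finrank K U = n := fun U hU => hSdim U (by simpa [hT] using hU)
  have hsum : (∑ C : Chamber K V (2 * n), (if C.1 n ∈ S then (1 : ℚ) else 0) *
      (if K ∙ v ≤ C.1 n ∧ ¬ K ∙ v ≤ C.1 (n - i) then (q : ℚ) ^ i
        else if K ∙ v ≤ C.1 (n + i) ∧ ¬ K ∙ v ≤ C.1 n then -1 else 0))
      = ∑ U ∈ T, chiSum q n i U v := by
    unfold chiSum
    rw [Finset.sum_comm]
    refine Finset.sum_congr rfl fun C _ => ?_
    rw [Finset.sum_ite_eq]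
    by_cases h : C.1 n ∈ S <;> simp [hT, h, chi, Submodule.span_singleton_le_iff_mem]
  rw [hsum]
  rcases T.eq_empty_or_nonempty with hTe | ⟨U₀, hU₀⟩
  · simp [hTe]
  have hq1 : 1 < q := hK ▸ Fintype.one_lt_card
  have hU₀n := hTdim U₀ hU₀
  obtain ⟨v₀, hv₀U, hv₀⟩ := Submodule.exists_mem_ne_zero_of_ne_bot
    (p := U₀) (by rintro rfl; simp at hU₀n; omega)
  obtain ⟨w₀, hw₀U⟩ : ∃ w, w ∉ U₀ := by
    by_contra! h
    have : U₀ = ⊤ := by ext; simp [h]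
    subst this
    simp at hU₀n
    omega
  have hw₀ : w₀ ≠ 0 := fun h => hw₀U (h ▸ U₀.zero_mem)
  set a := chiSum q n i U₀ v₀
  set b := chiSum q n i U₀ w₀
  have hF : ∀ U : Submodule K V, finrank K U = n → ∀ w : V, chiSum q n i U w =
      a * (if w ∈ U then 1 else 0) + b * (1 - if w ∈ U then 1 else 0)
        - a * (if w ∈ (⊥ : Submodule K V) then 1 else 0) := by
    intro U hU w
    by_cases hw : w = 0
    · subst hw
      simp [chiSum_zero]
    by_cases hwU : w ∈ U
    · obtain ⟨g, rfl, rfl⟩ := exists_linearEquiv_map_eq (hU₀n.trans hU.symm) hv₀ hw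
        (iff_of_true hv₀U hwU)
      rw [chiSum_map]
      simp [hw, hv₀U, a]
    · obtain ⟨g, rfl, rfl⟩ := exists_linearEquiv_map_eq (hU₀n.trans hU.symm) hw₀ hw
        (iff_of_false hw₀U hwU)
      rw [chiSum_map]
      simp [hw₀, hw₀U, b]
  have hcardV : (Fintype.card V : ℚ) = (q : ℚ) ^ (2 * n) := by
    rw [Module.card_eq_pow_finrank (K := K), hV, hK]
    push_cast
    rfl
  have hrel : a * (q : ℚ) ^ n + b * ((q : ℚ) ^ (2 * n) - (q : ℚ) ^ n) - a = 0 := by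
    rw [← sum_chiSum_vec hK hin U₀]
    simp only [hF U₀ hU₀n, Finset.sum_sub_distrib, Finset.sum_add_distrib, ← Finset.mul_sum,
      sum_indicator_mem, hU₀n, hK]
    simp [hcardV]
  have hspread : ∀ w : V, w ≠ 0 → ∑ U ∈ T, (if w ∈ U then (1 : ℚ) else 0) = t := by
    intro w hw
    rw [← hSspread (K ∙ w) (finrank_span_singleton hw), Finset.sum_boole, Nat.card_eq_fintype_card,
      Fintype.card_subtype, hT, Finset.filter_filter]
    simp [Submodule.span_singleton_le_iff_mem]
  -- Counting the pairs `(w, U)` with `w ∈ U ∈ S` in two ways yields `|S|`.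
  have hcount : (#T : ℚ) * (q : ℚ) ^ n = t * (q : ℚ) ^ (2 * n) + (#T - t) := by
    have h1 : ∑ U ∈ T, ∑ w : V, (if w ∈ U then (1 : ℚ) else 0) = #T * (q : ℚ) ^ n := by
      rw [Finset.sum_congr rfl fun U hU => by rw [sum_indicator_mem, hTdim U hU, hK]]
      simp
    have h2 : ∀ w : V, ∑ U ∈ T, (if w ∈ U then (1 : ℚ) else 0) =
        t + (#T - t) * if w ∈ (⊥ : Submodule K V) then 1 else 0 := by
      intro w
      by_cases hw : w = 0
      · simp [hw]
      · simp [hspread w hw, hw]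
    rw [← h1, Finset.sum_comm]
    simp only [h2, Finset.sum_add_distrib, ← Finset.mul_sum, sum_indicator_mem]
    simp [hcardV, mul_comm]
  have hqn : (q : ℚ) ^ n - 1 ≠ 0 := by
    have : (1 : ℚ) < (q : ℚ) ^ n := one_lt_pow₀ (by exact_mod_cast hq1) (by omega)
    linarith
  have hpow : (q : ℚ) ^ (2 * n) = (q : ℚ) ^ n * (q : ℚ) ^ n := by rw [two_mul, pow_add]
  rw [hpow] at hrel hcount
  have hab : a + b * (q : ℚ) ^ n = 0 :=
    mul_left_cancel₀ hqn (by linear_combination hrel)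
  have hTcard : (#T : ℚ) = t * ((q : ℚ) ^ n + 1) :=
    mul_left_cancel₀ hqn (by linear_combination hcount)
  have hfin : ∑ U ∈ T, chiSum q n i U v = a * t + b * (#T - t) := by
    rw [Finset.sum_congr rfl fun U hU => hF U (hTdim U hU) v]
    simp only [Finset.sum_sub_distrib, Finset.sum_add_distrib, ← Finset.mul_sum, hspread v hv]
    simp [hv]
  rw [hfin, hTcard]
  linear_combination (t : ℚ) * hab
end

section
/- Let 𝓕 be a maximum EKR-set of chambers of F_q^{2n}, i.e., an independent set of the oppositeness graph of size z_{2n}(q)/(q^n+1). For s ≤ n, the s-dimensional subspaces that are heavy with respect to 𝓕 (meaning every chamber containing them lies in 𝓕) pairwise intersect non-trivially; consequently, by the Frankl–Wilson EKR theorem for vector spaces, there are at most [2n-1 choose s-1]_q heavy s-subspaces. -/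
/-! The first claim: if heavy `s`-subspaces `S₁`, `S₂` were disjoint, a basis of `V` whose first `s`
vectors span `S₁` and whose last `s` vectors span `S₂` would give, through its initial and its final
segments, two opposite chambers, one through `S₁` and one through `S₂` (`exists_opposite`). Both lie
in `F` by heaviness, which is impossible.

The bound splits into two cases, neither of which needs the full Frankl–Wilson theorem.

* For `s < n` the dimension `2 * n` is at least `2 * s + 2`, and Hsieh's covering argument works
  (`ekr_subspaces`). Let `τ` be the least dimension of a subspace `T` meeting all members of the
  intersecting family. If `A` has dimension less than `τ`, some member `S₀` is disjoint from `A`, so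
  every member through `A` contains `A ⊔ ⟨v⟩` for one of the `q ^ s - 1` nonzero `v ∈ S₀`. Iterating
  from a nonzero vector of `T` up to dimension `τ` bounds the family by
  `(q ^ τ - 1) * (q ^ s - 1) ^ (τ - 1)` times the number of `s`-subspaces through a `τ`-subspace,
  which is at most `[2n-1 choose s-1]_q` when `τ ≥ 2`. When `τ = 1`, all members contain the point
  `T`, and the bound is the number of `s`-subspaces through a point.

* For `s = n` the size of `F` is used. All `n`-subspaces lie in equally many chambers, so heavy
  `n`-subspaces form at most the fraction `1 / (q ^ n + 1)` of all `n`-subspaces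
  (`card_heavy_middle`), and `[2n choose n]_q / (q ^ n + 1) = [2n-1 choose n-1]_q`.

The numbers of subspaces come from `card_superspaces`. Gaussian binomials are handled throughout in
the multiplied-out form `x * ∏ (q ^ i - 1) ≤ ∏ (q ^ (m + i) - 1)`, which avoids divisibility of
natural numbers. -/

open Module Finset
open scoped Classical

namespace HeavySubspaces

variable {K V : Type*} [Field K] [AddCommGroup V] [Module K V]

/-! ### Opposite chambers through two disjoint subspaces -/

/-- Two disjoint `s`-subspaces are spanned by the first and the last `s` vectors of a common
basis of `V`. -/
lemma exists_adapted_family [FiniteDimensional K V] {c s : ℕ} (hV : finrank K V = c)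
    {S₁ S₂ : Submodule K V} (h₁ : finrank K S₁ = s) (h₂ : finrank K S₂ = s)
    (h : Disjoint S₁ S₂) :
    ∃ v : Fin c → V, LinearIndependent K v ∧ (∀ j : Fin c, (j : ℕ) < s → v j ∈ S₁) ∧
      ∀ j : Fin c, c - s ≤ (j : ℕ) → v j ∈ S₂ := by
  obtain ⟨U, hU, hUc⟩ := h.symm.exists_isCompl
  obtain ⟨W, hW, hWU⟩ := IsModularLattice.exists_disjoint_and_sup_eq hU
  have hdim : s + (finrank K W + s) = c := by
    have e1 := Submodule.finrank_add_eq_of_isCompl hUc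
    have e2 := Submodule.finrank_sup_add_finrank_inf_eq S₂ W
    rw [hW.eq_bot, hWU, finrank_bot] at e2
    omega
  obtain ⟨m, hm⟩ : ∃ m, finrank K W = m := ⟨_, rfl⟩
  rw [hm] at hdim
  let b₁ := finBasisOfFinrankEq K S₁ h₁
  let b₂ := finBasisOfFinrankEq K S₂ h₂
  let b₃ := finBasisOfFinrankEq K W hm
  have key : ∀ (T : Submodule K V) {k : ℕ} (b : Basis (Fin k) K T),
      LinearIndependent K (fun i => (b i : V)) ∧
        Submodule.span K (Set.range fun i => (b i : V)) = T := by
    intro T k b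
    refine ⟨b.linearIndependent.map' T.subtype T.ker_subtype, ?_⟩
    have : (Set.range fun i => (b i : V)) = T.subtype '' Set.range b := by
      rw [← Set.range_comp]; rfl
    rw [this, Submodule.span_image, b.span_eq, Submodule.map_top, Submodule.range_subtype]
  have l32 := (key W b₃).1.sum_type (key S₂ b₂).1 (by
    rw [(key W b₃).2, (key S₂ b₂).2]; exact hW.symm)
  have l := (key S₁ b₁).1.sum_type l32 (by
    rw [(key S₁ b₁).2, Set.Sum.elim_range, Submodule.span_union, (key W b₃).2, (key S₂ b₂).2,
      sup_comm, hWU]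
    exact hUc.disjoint.symm)
  subst hdim
  refine ⟨_, l.comp (((Equiv.sumCongr (Equiv.refl _) finSumFinEquiv).trans finSumFinEquiv).symm)
    (Equiv.injective _), fun j hj => ?_, fun j hj => ?_⟩
  · induction j using Fin.addCases with
    | left i => simp [finSumFinEquiv_symm_apply_castAdd]
    | right i => simp at hj
  · induction j using Fin.addCases with
    | left i => simp at hj; omega
    | right i =>
      induction i using Fin.addCases with
      | left i => simp at hj; omega
      | right i => simp [finSumFinEquiv_symm_apply_natAdd]

/-- The spans of an increasing sequence of sets of basis vectors, the `i`-th one of size `i`, form a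
chamber. -/
lemma isChamber_span [FiniteDimensional K V] {c : ℕ} (hV : finrank K V = c) {v : Fin c → V}
    (hv : LinearIndependent K v) (T : ℕ → Finset (Fin c)) (hT : Monotone T)
    (hcard : ∀ i ≤ c, (T i).card = i) :
    IsChamber K c (fun i => Submodule.span K (v '' (T i : Set (Fin c)))) := by
  have hfin : ∀ i ≤ c, finrank K (Submodule.span K (v '' (T i : Set (Fin c)))) = i := by
    intro i hi
    have := finrank_span_eq_card (hv.comp ((↑) : T i → Fin c) Subtype.val_injective)
    rw [Set.range_comp, Subtype.range_coe_subtype] at this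
    simpa [hcard i hi] using this
  refine ⟨fun i j hij => Submodule.span_mono (Set.image_mono (by exact_mod_cast hT hij)), hfin,
    fun i hi => ?_⟩
  rw [eq_top_iff]
  have h1 : Submodule.span K (v '' (T c : Set (Fin c))) = ⊤ :=
    Submodule.eq_top_of_finrank_eq (by rw [hfin c le_rfl, hV])
  rw [← h1]
  exact Submodule.span_mono (Set.image_mono (by exact_mod_cast hT hi))

/-- Flags of initial and of final segments of an adapted basis are opposite. -/
lemma exists_opposite [FiniteDimensional K V] {c s : ℕ} (hV : finrank K V = c) (hs : s ≤ c)
    {S₁ S₂ : Submodule K V} (h₁ : finrank K S₁ = s) (h₂ : finrank K S₂ = s)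
    (h : Disjoint S₁ S₂) :
    ∃ C D : Chamber K V c, C.1 s = S₁ ∧ D.1 s = S₂ ∧ OppositeChambers K c C.1 D.1 := by
  obtain ⟨v, hv, hv1, hv2⟩ := exists_adapted_family hV h₁ h₂ h
  have hC := isChamber_span hV hv (fun i => Finset.univ.filter fun j => (j : ℕ) < i)
    (fun i k hik j => by simp; omega)
    (fun i hi => by
      rw [Fin.card_filter_val_lt]; omega)
  have hD := isChamber_span hV hv (fun i => Finset.univ.filter fun j => c - i ≤ (j : ℕ))
    (fun i k hik j => by simp; omega)
    (fun i hi => by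
      have := Finset.card_filter_add_card_filter_not (s := (Finset.univ : Finset (Fin c)))
        (fun j => (j : ℕ) < c - i)
      rw [Fin.card_filter_val_lt] at this
      simp only [not_lt, Finset.card_univ, Fintype.card_fin] at this
      omega)
  refine ⟨⟨_, hC⟩, ⟨_, hD⟩, ?_, ?_, ?_⟩
  · refine Submodule.eq_of_le_of_finrank_eq ?_ ((hC.2.1 s hs).trans h₁.symm)
    rw [Submodule.span_le]
    rintro _ ⟨j, hj, rfl⟩
    exact hv1 j (by simpa using hj)
  · refine Submodule.eq_of_le_of_finrank_eq ?_ ((hD.2.1 s hs).trans h₂.symm)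
    rw [Submodule.span_le]
    rintro _ ⟨j, hj, rfl⟩
    exact hv2 j (by simpa using hj)
  · intro i _ hi
    refine (hv.disjoint_span_image ?_).eq_bot
    rw [Set.disjoint_left]
    intro j hj hj'
    simp at hj hj'
    omega

/-! ### Covering the members of a family -/

lemma finrank_sup_span_singleton [FiniteDimensional K V] {A : Submodule K V} {v : V}
    (hv : v ∉ A) : finrank K ↥(A ⊔ K ∙ v) = finrank K A + 1 := by
  have hv0 : v ≠ 0 := by rintro rfl; exact hv A.zero_mem
  have h := Submodule.finrank_sup_add_finrank_inf_eq A (K ∙ v)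
  have hd : A ⊓ K ∙ v = ⊥ := ((Submodule.disjoint_span_singleton' hv0).2 hv).eq_bot
  rw [hd, finrank_bot, finrank_span_singleton hv0] at h
  simpa using h

lemma sup_span_singleton_le {A S : Submodule K V} {v : V} :
    A ⊔ K ∙ v ≤ S ↔ A ≤ S ∧ v ∈ S := by
  rw [sup_le_iff, Submodule.span_singleton_le_iff_mem]

variable [Fintype K] [Fintype V]

lemma card_mem (S : Submodule K V) :
    #{v : V | v ∈ S} = Fintype.card K ^ finrank K S := by
  rw [← Module.card_eq_pow_finrank (K := K) (V := S), Fintype.card_subtype]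

lemma card_mem_not_mem {A S : Submodule K V} (h : A ≤ S) :
    #{v : V | v ∈ S ∧ v ∉ A} = Fintype.card K ^ finrank K S - Fintype.card K ^ finrank K A := by
  rw [← card_mem, ← card_mem, ← Finset.card_sdiff_of_subset]
  · congr 1; ext v; simp
  · intro v; simpa using @h v

/-- If `T` meets every member of `G` through `A`, then these members are covered by
those through the spaces `A ⊔ ⟨v⟩` with `v ∈ T` nonzero. -/
lemma card_le_of_meets (G : Finset (Submodule K V)) {A T : Submodule K V}
    (hG : ∀ S ∈ G, A ≤ S → T ⊓ S ≠ ⊥) (B : ℕ)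
    (hB : ∀ v ∈ T, v ≠ 0 → #{S ∈ G | A ⊔ K ∙ v ≤ S} ≤ B) :
    #{S ∈ G | A ≤ S} ≤ (Fintype.card K ^ finrank K T - 1) * B := by
  have hsub : ({S ∈ G | A ≤ S} : Finset _) ⊆
      ({v : V | v ∈ T ∧ v ∉ (⊥ : Submodule K V)} : Finset V).biUnion
        fun v => {S ∈ G | A ⊔ K ∙ v ≤ S} := by
    intro S hS
    simp only [mem_filter] at hS
    obtain ⟨v, hv, hv0⟩ := Submodule.exists_mem_ne_zero_of_ne_bot (hG S hS.1 hS.2)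
    simp only [mem_biUnion, mem_filter, mem_univ, true_and, sup_span_singleton_le,
      Submodule.mem_bot]
    exact ⟨v, ⟨hv.1, hv0⟩, hS.1, hS.2, hv.2⟩
  refine (card_le_card hsub).trans (card_biUnion_le.trans ?_)
  refine (Finset.sum_le_card_nsmul _ _ B ?_).trans ?_
  · intro v hv
    simp only [mem_filter, mem_univ, true_and, Submodule.mem_bot] at hv
    exact hB v hv.1 hv.2
  · rw [card_mem_not_mem bot_le, finrank_bot, pow_zero, smul_eq_mul]

/-- If no subspace of dimension less than `τ` meets all members of the family `G` of
`s`-subspaces, then the degree in `G` of a subspace grows by a factor of at most `q ^ s - 1` each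
time its codimension in dimension `τ` increases by one. -/
lemma degree_le {s τ B : ℕ} (G : Finset (Submodule K V)) (hdim : ∀ S ∈ G, finrank K S = s)
    (hτ : ∀ A : Submodule K V, finrank K A < τ → ∃ S ∈ G, A ⊓ S = ⊥)
    (hint : ∀ S ∈ G, ∀ S' ∈ G, S ⊓ S' ≠ ⊥)
    (hB : ∀ A : Submodule K V, finrank K A = τ → #{S ∈ G | A ≤ S} ≤ B)
    (j : ℕ) (A : Submodule K V) (hA : finrank K A + j = τ) :
    #{S ∈ G | A ≤ S} ≤ (Fintype.card K ^ s - 1) ^ j * B := by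
  induction j generalizing A with
  | zero => simpa using hB A (by omega)
  | succ j ih =>
    obtain ⟨S₀, hS₀, hAS⟩ := hτ A (by omega)
    have := card_le_of_meets G (A := A) (T := S₀) (fun S hS _ => hint S₀ hS₀ S hS)
      ((Fintype.card K ^ s - 1) ^ j * B) (fun v hv hv0 => ih _ (by
        rw [finrank_sup_span_singleton]
        · omega
        · intro hvA
          have : v ∈ A ⊓ S₀ := ⟨hvA, hv⟩
          rw [hAS] at this
          exact hv0 (by simpa using this)))
    rw [hdim S₀ hS₀] at this
    rwa [pow_succ', mul_assoc]

/-! ### Counting subspaces -/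

variable [Fintype (Submodule K V)]

/-- The number of `s`-subspaces through a subspace of dimension `s - j` is the Gaussian binomial
`[N - s + j choose j]_q`, by double counting the pairs `(S, v)` with `v ∈ S` outside `A`. -/
lemma card_superspaces {s : ℕ} (hs : s ≤ finrank K V) (j : ℕ) (A : Submodule K V)
    (hA : finrank K A + j = s) :
    #{S : Submodule K V | finrank K S = s ∧ A ≤ S} *
        ∏ i ∈ Icc 1 j, (Fintype.card K ^ i - 1) =
      ∏ i ∈ Icc 1 j, (Fintype.card K ^ (finrank K V - s + i) - 1) := by
  induction j generalizing A with
  | zero =>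
    have : ({S : Submodule K V | finrank K S = s ∧ A ≤ S} : Finset _) = {A} := by
      ext S
      simp only [mem_filter, mem_univ, true_and, mem_singleton]
      constructor
      · rintro ⟨h1, h2⟩
        exact (Submodule.eq_of_le_of_finrank_eq h2 (by omega)).symm
      · rintro rfl
        exact ⟨by omega, le_rfl⟩
    simp [this]
  | succ j ih =>
    set q := Fintype.card K
    set N := finrank K V
    set a := finrank K A with ha
    have hq : 0 < q := Fintype.card_pos
    have dc := Finset.sum_card_bipartiteAbove_eq_sum_card_bipartiteBelow
      (s := ({S : Submodule K V | finrank K S = s ∧ A ≤ S} : Finset _))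
      (t := ({v : V | v ∉ A} : Finset V)) (fun S v => v ∈ S)
    have hl : ∀ S ∈ ({S : Submodule K V | finrank K S = s ∧ A ≤ S} : Finset _),
        #(Finset.bipartiteAbove (fun (S : Submodule K V) v => v ∈ S)
          ({v : V | v ∉ A} : Finset V) S) = q ^ s - q ^ a := by
      intro S hS
      simp only [mem_filter, mem_univ, true_and] at hS
      rw [← hS.1, ha, ← card_mem_not_mem hS.2, Finset.bipartiteAbove, Finset.filter_filter]
      congr 1; ext v; simp [and_comm]
    have hr : ∀ v ∈ ({v : V | v ∉ A} : Finset V),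
        #(Finset.bipartiteBelow (fun (S : Submodule K V) v => v ∈ S)
          ({S : Submodule K V | finrank K S = s ∧ A ≤ S} : Finset _) v) *
          ∏ i ∈ Icc 1 j, (q ^ i - 1) = ∏ i ∈ Icc 1 j, (q ^ (N - s + i) - 1) := by
      intro v hv
      simp only [mem_filter, mem_univ, true_and] at hv
      rw [← ih (A ⊔ K ∙ v) (by rw [finrank_sup_span_singleton hv]; omega),
        Finset.bipartiteBelow, Finset.filter_filter]
      simp only [sup_span_singleton_le, and_assoc]
    have hout : #({v : V | v ∉ A} : Finset V) = q ^ N - q ^ a := by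
      have := card_mem_not_mem (le_top : A ≤ ⊤)
      simpa using this
    rw [Finset.sum_congr rfl hl, Finset.sum_const, smul_eq_mul] at dc
    have dc2 := congrArg (· * ∏ i ∈ Icc 1 j, (q ^ i - 1)) dc
    simp only [Finset.sum_mul] at dc2
    rw [Finset.sum_congr rfl hr, Finset.sum_const, smul_eq_mul, hout] at dc2
    have e1 : q ^ s - q ^ a = q ^ a * (q ^ (j + 1) - 1) := by
      rw [Nat.mul_sub, ← pow_add, mul_one, ← hA]
    have e2 : q ^ N - q ^ a = q ^ a * (q ^ (N - s + (j + 1)) - 1) := by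
      rw [Nat.mul_sub, ← pow_add, mul_one]; congr 2; omega
    rw [e1, e2] at dc2
    rw [Finset.prod_Icc_succ_top (by omega), Finset.prod_Icc_succ_top (by omega)]
    refine Nat.eq_of_mul_eq_mul_left (pow_pos hq a) ?_
    linarith

/-! ### Intersecting families below the middle dimension -/

/-- If `X` is at most the Gaussian binomial `[N - s + k choose k]_q` then
`(q ^ 2 * (q ^ s - 1)) ^ j * X` is at most `[N - s + k + j choose k + j]_q`. With `X` the number of
`s`-subspaces through a subspace of dimension `s - k`, this absorbs the factors `q ^ s - 1` lost in
`degree_le` and leaves a spare factor `q ^ 2` for each of them. -/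
lemma prod_estimate {q N s : ℕ} (hq : 2 ≤ q) (hN : 2 * s + 2 ≤ N) (k j : ℕ) (X : ℕ)
    (hX : X * ∏ i ∈ Icc 1 k, (q ^ i - 1) ≤ ∏ i ∈ Icc 1 k, (q ^ (N - s + i) - 1)) :
    (q ^ 2 * (q ^ s - 1)) ^ j * X * ∏ i ∈ Icc 1 (k + j), (q ^ i - 1) ≤
      ∏ i ∈ Icc 1 (k + j), (q ^ (N - s + i) - 1) := by
  induction j with
  | zero => simpa using hX
  | succ j ih =>
    rw [← add_assoc, Finset.prod_Icc_succ_top (by omega), Finset.prod_Icc_succ_top (by omega)]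
    have hstep : q ^ 2 * (q ^ s - 1) * (q ^ (k + j + 1) - 1) ≤ q ^ (N - s + (k + j + 1)) - 1 := by
      have h1 : q ^ 2 * (q ^ s - 1) ≤ q ^ (N - s) := by
        calc q ^ 2 * (q ^ s - 1) ≤ q ^ 2 * q ^ s := Nat.mul_le_mul_left _ (Nat.sub_le _ _)
          _ = q ^ (2 + s) := (pow_add _ _ _).symm
          _ ≤ q ^ (N - s) := Nat.pow_le_pow_right (by omega) (by omega)
      calc _ ≤ q ^ (N - s) * (q ^ (k + j + 1) - 1) := Nat.mul_le_mul_right _ h1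
        _ = q ^ (N - s + (k + j + 1)) - q ^ (N - s) := by rw [Nat.mul_sub, ← pow_add, mul_one]
        _ ≤ _ := Nat.sub_le_sub_left (Nat.one_le_pow _ _ (by omega)) _
    calc _ = ((q ^ 2 * (q ^ s - 1)) ^ j * X * ∏ i ∈ Icc 1 (k + j), (q ^ i - 1)) *
          (q ^ 2 * (q ^ s - 1) * (q ^ (k + j + 1) - 1)) := by ring
      _ ≤ _ := Nat.mul_le_mul ih hstep

/-- The Erdős–Ko–Rado theorem for `s`-subspaces of a space of dimension `N ≥ 2 * s + 2`: an
intersecting family has at most `[N - 1 choose s - 1]_q` members. -/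
lemma ekr_subspaces {s : ℕ} (hs : 1 ≤ s) (hN : 2 * s + 2 ≤ finrank K V)
    (G : Finset (Submodule K V)) (hdim : ∀ S ∈ G, finrank K S = s)
    (hint : ∀ S ∈ G, ∀ S' ∈ G, S ⊓ S' ≠ ⊥) :
    #G * ∏ i ∈ Icc 1 (s - 1), (Fintype.card K ^ i - 1) ≤
      ∏ i ∈ Icc 1 (s - 1), (Fintype.card K ^ (finrank K V - s + i) - 1) := by
  set q := Fintype.card K with hqdef
  have hq : 2 ≤ q := Fintype.one_lt_card
  rcases G.eq_empty_or_nonempty with rfl | ⟨S₀, hS₀⟩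
  · simp
  -- `τ` is the least dimension of a subspace meeting all members of `G`
  have hex : ∃ t, ∃ T : Submodule K V, finrank K T = t ∧ ∀ S ∈ G, T ⊓ S ≠ ⊥ :=
    ⟨s, S₀, hdim S₀ hS₀, hint S₀ hS₀⟩
  obtain ⟨T, hT, hTG⟩ := Nat.find_spec hex
  set τ := Nat.find hex
  have hτs : τ ≤ s := Nat.find_min' hex ⟨S₀, hdim S₀ hS₀, hint S₀ hS₀⟩
  have hτ1 : 1 ≤ τ := by
    by_contra h0
    have : T = ⊥ := Submodule.finrank_eq_zero.1 (by omega)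
    exact hTG S₀ hS₀ (by rw [this, bot_inf_eq])
  have hτ : ∀ A : Submodule K V, finrank K A < τ → ∃ S ∈ G, A ⊓ S = ⊥ := by
    intro A hA
    have := Nat.find_min hex hA
    push Not at this
    exact this A rfl
  -- any two subspaces of dimension `τ` lie in equally many `s`-subspaces
  set B := #{S : Submodule K V | finrank K S = s ∧ T ≤ S} with hBdef
  have hBT := card_superspaces (by omega : s ≤ finrank K V) (s - τ) T (by omega)
  have hpos : 0 < ∏ i ∈ Icc 1 (s - τ), (q ^ i - 1) := by
    refine Finset.prod_pos fun i hi => ?_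
    have := Nat.one_lt_pow (n := i) (by simp at hi; omega) (by omega : 1 < q)
    omega
  have hB : ∀ A : Submodule K V, finrank K A = τ → #{S ∈ G | A ≤ S} ≤ B := by
    intro A hA
    have hBA := card_superspaces (by omega : s ≤ finrank K V) (s - τ) A (by omega)
    rw [← hBT] at hBA
    rw [hBdef, ← Nat.eq_of_mul_eq_mul_right hpos hBA]
    refine card_le_card fun S hS => ?_
    simp only [mem_filter, mem_univ, true_and] at hS ⊢
    exact ⟨hdim S hS.1, hS.2⟩
  have hest := prod_estimate hq hN (s - τ) (τ - 1) B hBT.le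
  rw [show s - τ + (τ - 1) = s - 1 by omega] at hest
  refine (Nat.mul_le_mul_right _ ?_).trans hest
  rcases Nat.lt_or_ge 1 τ with h2 | h1
  · have hbot : ({S ∈ G | (⊥ : Submodule K V) ≤ S} : Finset _) = G := by simp
    have hcov := card_le_of_meets G (A := ⊥) (T := T) (fun S hS _ => hTG S hS)
      ((q ^ s - 1) ^ (τ - 1) * B) (fun v hv hv0 => degree_le G hdim hτ hint hB (τ - 1) _ (by
        rw [finrank_sup_span_singleton (by simpa using hv0), finrank_bot]; omega))
    rw [hbot, hT, ← hqdef] at hcov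
    refine hcov.trans ?_
    rw [mul_pow, ← mul_assoc]
    refine Nat.mul_le_mul_right _ (Nat.mul_le_mul_right _ ?_)
    rw [← pow_mul]
    exact (Nat.sub_le _ _).trans (Nat.pow_le_pow_right (by omega) (by omega))
  · -- a point meeting all members of `G` is contained in all of them
    have h1' : τ = 1 := by omega
    have hall : ({S ∈ G | T ≤ S} : Finset _) = G := by
      refine Finset.filter_true_of_mem fun S hS => ?_
      have h0 : finrank K ↥(T ⊓ S) ≠ 0 := fun h => hTG S hS (Submodule.finrank_eq_zero.1 h)
      have := Submodule.eq_of_le_of_finrank_le (inf_le_left : T ⊓ S ≤ T) (by omega)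
      exact inf_eq_left.1 this
    have := hB T hT
    rw [hall] at this
    simpa [h1'] using this

/-! ### The middle dimension -/

/-- A chamber is determined by its members of index less than `c`, so there are finitely many. -/
lemma finite_chamber {K V : Type*} [Field K] [AddCommGroup V] [Module K V]
    [Finite (Submodule K V)] (c : ℕ) : Finite (Chamber K V c) := by
  refine Finite.of_injective (β := Fin c → Submodule K V) (fun C i => C.1 i) fun C D h => ?_
  refine Subtype.ext (funext fun i => ?_)
  rcases lt_or_ge i c with hi | hi
  · exact congrFun h ⟨i, hi⟩
  · rw [C.2.2.2 i hi, D.2.2.2 i hi]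

/-- The image of a chamber under a linear automorphism. -/
def mapChamber {K V : Type*} [Field K] [AddCommGroup V] [Module K V] {c : ℕ} (e : V ≃ₗ[K] V)
    (C : Chamber K V c) : Chamber K V c :=
  ⟨fun i => (C.1 i).map (e : V →ₗ[K] V), fun _ _ h => Submodule.map_mono (C.2.1 h),
    fun i hi => (LinearEquiv.finrank_map_eq e _).trans (C.2.2.1 i hi), fun i hi => by
      beta_reduce
      rw [C.2.2.2 i hi, Submodule.map_top, LinearEquiv.range]⟩

/-- Linear automorphisms act transitively on the subspaces of a given dimension. -/
lemma exists_map_eq {K V : Type*} [Field K] [AddCommGroup V] [Module K V]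
    [FiniteDimensional K V] {S S' : Submodule K V} (h : finrank K S = finrank K S') :
    ∃ e : V ≃ₗ[K] V, S.map (e : V →ₗ[K] V) = S' := by
  obtain ⟨W, hW⟩ := Submodule.exists_isCompl S
  obtain ⟨W', hW'⟩ := Submodule.exists_isCompl S'
  have d := Submodule.finrank_add_eq_of_isCompl hW
  have d' := Submodule.finrank_add_eq_of_isCompl hW'
  let e₁ : S ≃ₗ[K] S' := LinearEquiv.ofFinrankEq _ _ h
  let e₂ : W ≃ₗ[K] W' := LinearEquiv.ofFinrankEq _ _ (by omega)
  let e := (Submodule.prodEquivOfIsCompl S W hW).symm.trans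
    ((e₁.prodCongr e₂).trans (Submodule.prodEquivOfIsCompl S' W' hW'))
  refine ⟨e, Submodule.eq_of_le_of_finrank_eq ?_ ((LinearEquiv.finrank_map_eq e S).trans h)⟩
  rintro _ ⟨x, hx, rfl⟩
  have hx' : (Submodule.prodEquivOfIsCompl S W hW).symm x = (⟨x, hx⟩, 0) :=
    Submodule.prodEquivOfIsCompl_symm_apply_left S W hW ⟨x, hx⟩
  have : e x = e₁ ⟨x, hx⟩ := by simp [e, hx']
  simp [this]

lemma card_fiber_le {K V : Type*} [Field K] [AddCommGroup V] [Module K V]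
    [FiniteDimensional K V] {c : ℕ} [Fintype (Chamber K V c)] (s : ℕ) {S S' : Submodule K V}
    (h : finrank K S = finrank K S') :
    #{C : Chamber K V c | C.1 s = S} ≤ #{C : Chamber K V c | C.1 s = S'} := by
  obtain ⟨e, he⟩ := exists_map_eq h
  refine Finset.card_le_card_of_injOn (mapChamber e) ?_ ?_
  · intro C hC
    simp only [coe_filter, mem_univ, true_and, Set.mem_ofPred_eq] at hC ⊢
    rw [← he, ← hC]
    rfl
  · intro C _ D _ hCD
    refine Subtype.ext (funext fun i => ?_)
    exact Submodule.map_injective_of_injective e.injective (congrFun (congrArg Subtype.val hCD) i)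

/-- All `s`-subspaces lie in equally many chambers, so the proportion of heavy `s`-subspaces is at
most the proportion `1 / r` of chambers in `F`. -/
lemma card_heavy_mul_le {K V : Type*} [Field K] [AddCommGroup V] [Module K V] [Fintype V]
    [Fintype (Submodule K V)] {c s : ℕ} (hV : finrank K V = c) (hs : 2 * s ≤ c)
    (F : Set (Chamber K V c)) (r : ℕ)
    (hF : Nat.card F * r = Nat.card (Chamber K V c)) (G : Finset (Submodule K V))
    (hG : ∀ S ∈ G, finrank K S = s ∧ ∀ C : Chamber K V c, C.1 s = S → C ∈ F) :
    #G * r ≤ #{S : Submodule K V | finrank K S = s} := by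
  have := finite_chamber (K := K) (V := V) c
  let := Fintype.ofFinite (Chamber K V c)
  have : FiniteDimensional K V := Module.Finite.of_finite
  rcases G.eq_empty_or_nonempty with rfl | ⟨S₀, hS₀⟩
  · simp
  set m := #{C : Chamber K V c | C.1 s = S₀} with hm
  have hfib : ∀ S : Submodule K V, finrank K S = s → #{C : Chamber K V c | C.1 s = S} = m := by
    intro S hS
    have hSS : finrank K S = finrank K S₀ := hS.trans (hG S₀ hS₀).1.symm
    exact le_antisymm (card_fiber_le s hSS) (card_fiber_le s hSS.symm)
  have htot : Nat.card (Chamber K V c) = #{S : Submodule K V | finrank K S = s} * m := by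
    rw [Nat.card_eq_fintype_card, ← Finset.card_univ,
      Finset.card_eq_sum_card_fiberwise (f := fun C : Chamber K V c => C.1 s)
        (t := {S : Submodule K V | finrank K S = s})]
    · rw [Finset.sum_congr rfl (fun S hS => hfib S (by simpa using hS)), Finset.sum_const,
        smul_eq_mul]
    · intro C _
      simpa using C.2.2.1 s (by omega)
  have hheavy : #G * m ≤ Nat.card F := by
    rw [Nat.card_eq_card_toFinset, ← smul_eq_mul, ← Finset.sum_const,
      ← Finset.sum_congr rfl (fun S hS => hfib S (hG S hS).1), ← Finset.card_biUnion]
    · refine card_le_card fun C hC => ?_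
      simp only [mem_biUnion, mem_filter, mem_univ, true_and, exists_eq_right'] at hC
      simpa using (hG _ hC).2 C rfl
    · intro S _ S' _ hne
      rw [Function.onFun, Finset.disjoint_left]
      intro C hC hC'
      simp only [mem_filter, mem_univ, true_and] at hC hC'
      exact hne (hC.symm.trans hC')
  have hpos : 0 < m := by
    -- a complement of `S₀` contains an `s`-subspace, which is disjoint from `S₀`
    have hS₀s := (hG S₀ hS₀).1
    obtain ⟨W, hW⟩ := Submodule.exists_isCompl S₀
    have d := Submodule.finrank_add_eq_of_isCompl hW
    obtain ⟨f, hf⟩ := exists_linearIndependent_of_le_finrank (R := K) (M := W) (n := s) (by omega)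
    have hf' := hf.map' W.subtype W.ker_subtype
    have hTs := (finrank_span_eq_card hf').trans (Fintype.card_fin s)
    have hT : Submodule.span K (Set.range (W.subtype ∘ f)) ≤ W := by
      rw [Submodule.span_le]
      rintro _ ⟨i, rfl⟩
      exact (f i).2
    obtain ⟨C, D, hC, -, -⟩ := exists_opposite hV (by omega) hS₀s hTs (hW.disjoint.mono_right hT)
    exact Finset.card_pos.2 ⟨C, by simpa using hC⟩
  refine Nat.le_of_mul_le_mul_right ?_ hpos
  rw [← htot, ← hF]
  calc #G * r * m = #G * m * r := by ring
    _ ≤ _ := Nat.mul_le_mul_right _ hheavy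

/-- The bound on heavy subspaces in the middle dimension. -/
lemma card_heavy_middle {n : ℕ} (hn : 1 ≤ n) (hV : finrank K V = 2 * n)
    (F : Set (Chamber K V (2 * n)))
    (hF : Nat.card F * (Fintype.card K ^ n + 1) = Nat.card (Chamber K V (2 * n)))
    (G : Finset (Submodule K V))
    (hG : ∀ S ∈ G, finrank K S = n ∧ ∀ C : Chamber K V (2 * n), C.1 n = S → C ∈ F) :
    #G * ∏ i ∈ Icc 1 (n - 1), (Fintype.card K ^ i - 1) ≤
      ∏ i ∈ Icc 1 (n - 1), (Fintype.card K ^ (finrank K V - n + i) - 1) := by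
  have hle := card_heavy_mul_le hV le_rfl F _ hF G hG
  have hcount := card_superspaces (K := K) (V := V) (s := n) (by omega) n ⊥ (by simp)
  simp only [bot_le, and_true] at hcount
  obtain ⟨k, rfl⟩ : ∃ k, n = k + 1 := ⟨n - 1, by omega⟩
  set q := Fintype.card K with hqdef
  have hq : 2 ≤ q := Fintype.one_lt_card
  rw [Nat.add_sub_cancel]
  rw [Finset.prod_Icc_succ_top (by omega), Finset.prod_Icc_succ_top (by omega)] at hcount
  have hpow : 1 < q ^ (k + 1) := Nat.one_lt_pow (by omega) hq
  -- `q ^ (2 * n) - 1 = (q ^ n + 1) * (q ^ n - 1)` cancels against the density of `F`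
  have hfac : q ^ (finrank K V - (k + 1) + (k + 1)) - 1 =
      (q ^ (k + 1) + 1) * (q ^ (k + 1) - 1) := by
    rw [← Nat.sq_sub_sq, one_pow, ← pow_mul]
    congr 2; omega
  rw [hfac] at hcount
  have hpos : 0 < (q ^ (k + 1) + 1) * (q ^ (k + 1) - 1) := Nat.mul_pos (by omega) (by omega)
  refine Nat.le_of_mul_le_mul_right ?_ hpos
  rw [← hcount]
  calc _ = #G * (q ^ (k + 1) + 1) *
        ((∏ i ∈ Icc 1 k, (q ^ i - 1)) * (q ^ (k + 1) - 1)) := by ring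
    _ ≤ _ := Nat.mul_le_mul_right _ hle

end HeavySubspaces

/-- for a maximum EKR-set `𝓕` of chambers of `𝔽_q^{2n}` and `s ≤ n`, the heavy
`s`-subspaces pairwise intersect non-trivially, and consequently there are at most
`[2n-1 choose s-1]_q` of them. -/
theorem heavy_subspaces (q n s : ℕ) (hs1 : 1 ≤ s) (hsn : s ≤ n)
    (K V : Type*) [Field K] [Fintype K]
    [AddCommGroup V] [Module K V] [FiniteDimensional K V]
    (hK : Fintype.card K = q) (hV : Module.finrank K V = 2 * n)
    (F : Set (Chamber K V (2 * n)))
    (hFind : ∀ C ∈ F, ∀ D ∈ F, ¬ OppositeChambers K (2 * n) C.1 D.1)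
    (hFmax : Nat.card F * (q ^ n + 1) = Nat.card (Chamber K V (2 * n))) :
    (∀ S₁ S₂ : Submodule K V,
        Module.finrank K S₁ = s → Module.finrank K S₂ = s →
        (∀ C : Chamber K V (2 * n), C.1 s = S₁ → C ∈ F) →
        (∀ C : Chamber K V (2 * n), C.1 s = S₂ → C ∈ F) →
        S₁ ⊓ S₂ ≠ ⊥) ∧
      Nat.card {S : Submodule K V // Module.finrank K S = s ∧
          ∀ C : Chamber K V (2 * n), C.1 s = S → C ∈ F} ≤
        gaussNat q (2 * n - 1) (s - 1) := by
  have hheavy : ∀ S₁ S₂ : Submodule K V,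
      Module.finrank K S₁ = s → Module.finrank K S₂ = s →
      (∀ C : Chamber K V (2 * n), C.1 s = S₁ → C ∈ F) →
      (∀ C : Chamber K V (2 * n), C.1 s = S₂ → C ∈ F) → S₁ ⊓ S₂ ≠ ⊥ := by
    intro S₁ S₂ h₁ h₂ H₁ H₂ hbot
    obtain ⟨C, D, hC, hD, hopp⟩ :=
      HeavySubspaces.exists_opposite hV (by omega) h₁ h₂ (disjoint_iff.2 hbot)
    exact hFind C (H₁ C hC) D (H₂ D hD) hopp
  refine ⟨hheavy, ?_⟩
  have : Finite V := Module.finite_of_finite K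
  let := Fintype.ofFinite V
  let := Fintype.ofFinite (Submodule K V)
  set G : Finset (Submodule K V) := Finset.univ.filter fun S =>
    Module.finrank K S = s ∧ ∀ C : Chamber K V (2 * n), C.1 s = S → C ∈ F with hGdef
  have hG : ∀ S ∈ G, Module.finrank K S = s ∧
      ∀ C : Chamber K V (2 * n), C.1 s = S → C ∈ F := by
    intro S hS
    simpa [hGdef] using hS
  have hcard : Nat.card {S : Submodule K V // Module.finrank K S = s ∧
      ∀ C : Chamber K V (2 * n), C.1 s = S → C ∈ F} = G.card := by
    rw [Nat.card_eq_fintype_card, Fintype.card_subtype]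
  have hq : 1 < q := hK ▸ Fintype.one_lt_card
  have hpos : 0 < ∏ i ∈ Finset.Icc 1 (s - 1), (q ^ i - 1) := by
    refine Finset.prod_pos fun i hi => ?_
    have := Nat.one_lt_pow (n := i) (by simp at hi; omega) hq
    omega
  rw [hcard, gaussNat, Nat.le_div_iff_mul_le hpos, show 2 * n - 1 - (s - 1) = 2 * n - s by omega,
    ← hV]
  subst hK
  rcases hsn.eq_or_lt with rfl | hlt
  · exact HeavySubspaces.card_heavy_middle hs1 hV F hFmax G hG
  · exact HeavySubspaces.ekr_subspaces hs1 (by omega) G (fun S hS => (hG S hS).1)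
      fun S hS S' hS' => hheavy S S' (hG S hS).1 (hG S' hS').1 (hG S hS).2 (hG S' hS').2
end

section
/- Let 𝓕 be a maximum EKR-set of chambers of F_q^{2n}, S a subspace of dimension s with 0 < s < 2n, x the number of chambers C ∈ 𝓕 with C_s = S, and y the number with C_{2n-s} ∩ S = {0}. Then y = q^{s(2n-s)-n}·(z_s z_{2n-s} - x). In particular x ≤ z_s z_{2n-s}, and if x < z_s z_{2n-s} then x ≤ z_s z_{2n-s} - q^{2n² - 2ns - n + s²}. -/
/-!
The proof determines, for a maximum EKR-set `F`, how many members of `F` are opposite to a given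
chamber, and then counts opposite pairs twice.

Let `T i` be the matrix of `i`-adjacency (two chambers differing exactly in dimension `i`) and `A` the
matrix of opposition, for chambers of a space of dimension `m`. The `T i` satisfy the quadratic
Hecke relation `T² = (q - 1) T + q` (`adj_sq`), and `A` is the product of the `T i` along a reduced
word of the longest permutation (`opp_eq_longestWord`). Moreover `A T_i = T_{m-i} A` (`opp_mul_adj`), so
`A²` commutes with every `T i`. Let `W` be an eigenspace of `A²` inside the functions of sum zero, with
eigenvalue `μ` and dimension `d`, and put `a_i = dim ker (T_i - q)` on `W`. The quadratic relation gives
`|det T_i| = q^{a_i}`, conjugation by `A` gives `a_i = a_{m-i}`, and as the chamber graph is connected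
(`adj_fixed_eq_zero`) the kernels meet in zero, so that `∑ a_i ≤ (m - 2) d`. Comparing determinants yields
`μ^d = q^{m ∑ a_i}`, that is `μ ≤ q^{m(m-2)}` (`eigenvalue_le_of_hecke`). In this way the smallest
eigenvalue of `A` is controlled without representation theory.

For `m = 2n` the size of `F` meets the resulting ratio bound with equality. Hence the shifted indicator
function of `F` is an eigenvector of `A`, which means that every chamber outside `F` is opposite to
exactly `q^{2n(n-1)}` members of `F` (`card_opp_of_max`). Now count the opposite pairs of a chamber in
`F` and a chamber through `S` (`double_count`). There are `z_s z_{2n-s}` chambers through `S`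
(`card_through_eq`), and a chamber opposite to one of them is in general position to `S`; conversely, one
in general position to `S` is opposite to exactly `q^e` of them, `e = s(s-1)/2 + (2n-s)(2n-s-1)/2`,
because opposition can be tested on `S` and on `V / S` (`card_through_opp`). This is the formula for `y`.
If `x < z_s z_{2n-s}`, then `y > 0`, so some member of `F` is in general position to `S`, and the `q^e`
chambers through `S` opposite to it are not in `F`.
-/

open Module Finset
open scoped Classical

/-! ### Determinants in the Hecke relations -/

/-- An operator with `(T - q)(T + 1) = 0` acts as `q` on `ker (T - q)` and as `-1` on the quotient by
that kernel. -/
theorem abs_det_of_quadratic {W : Type*} [AddCommGroup W] [Module ℝ W] [FiniteDimensional ℝ W]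
    (T : Module.End ℝ W) (q : ℝ) (hq : 0 ≤ q)
    (hT : T * T = (q - 1) • T + q • (1 : Module.End ℝ W)) :
    |LinearMap.det T| = q ^ finrank ℝ (LinearMap.ker (T - q • (1 : Module.End ℝ W))) := by
  have hT' : ∀ x, T (T x) = (q - 1) • T x + q • x := fun x => by
    have := LinearMap.congr_fun hT x
    simpa using this
  set N := LinearMap.ker (T - q • (1 : Module.End ℝ W)) with hN
  have memN : ∀ x, x ∈ N ↔ T x = q • x := fun x => by
    simp [hN, LinearMap.mem_ker, sub_eq_zero]
  have he : N ≤ N.comap T := fun x hx => by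
    rw [Submodule.mem_comap, memN]
    rw [memN] at hx
    rw [hx, map_smul, hx]
  have h1 : T.restrict he = q • (LinearMap.id : N →ₗ[ℝ] N) := by
    ext x
    simpa using (memN x).1 x.2
  have h2 : N.mapQ N T he = (-1 : ℝ) • (LinearMap.id : (W ⧸ N) →ₗ[ℝ] (W ⧸ N)) := by
    refine Submodule.linearMap_qext _ (LinearMap.ext fun x => ?_)
    simp only [LinearMap.comp_apply, Submodule.mapQ_apply, LinearMap.smul_apply, LinearMap.id_apply,
      Submodule.mkQ_apply, ← Submodule.Quotient.mk_smul]
    rw [Submodule.Quotient.eq, memN, map_sub, hT' x, map_smul]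
    module
  rw [LinearMap.det_eq_det_mul_det N T he, h1, h2, LinearMap.det_smul, LinearMap.det_smul]
  simp [abs_mul, abs_pow, abs_of_nonneg hq]

/-- The codimension of an intersection is at most the sum of the codimensions, written without
subtraction. -/
theorem finrank_add_sum_le {W : Type*} [AddCommGroup W] [Module ℝ W] [FiniteDimensional ℝ W]
    (N : ℕ → Submodule ℝ W) (s : Finset ℕ) :
    finrank ℝ W + ∑ i ∈ s, finrank ℝ (N i) ≤ finrank ℝ (s.inf N : Submodule ℝ W) +
      #s * finrank ℝ W := by
  induction s using Finset.induction_on with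
  | empty =>
    rw [Finset.inf_empty, finrank_top]
    simp
  | insert a s ha ih =>
    rw [Finset.sum_insert ha, Finset.inf_insert, Finset.card_insert_of_notMem ha]
    have h1 := Submodule.finrank_sup_add_finrank_inf_eq (N a) (s.inf N)
    have h2 := Submodule.finrank_le (N a ⊔ s.inf N)
    rw [add_mul]
    omega

/-- In the standard reduced word of the longest element on `m` letters, `T_i` occurs `m - i` times. -/
theorem sum_sum_Ico (a : ℕ → ℕ) (m : ℕ) :
    ∑ j ∈ range m, ∑ i ∈ Ico 1 (j + 1), a i = ∑ i ∈ Ico 1 m, (m - i) * a i := by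
  induction m with
  | zero => simp
  | succ m ih =>
    rw [Finset.sum_range_succ, ih]
    rcases Nat.eq_zero_or_pos m with rfl | hm
    · simp
    rw [Finset.sum_Ico_succ_top hm, Finset.sum_Ico_succ_top hm, ← add_assoc,
      ← Finset.sum_add_distrib]
    congr 1
    · refine Finset.sum_congr rfl fun i hi => ?_
      rw [Finset.mem_Ico] at hi
      rw [Nat.succ_sub hi.2.le, Nat.succ_mul]
    · simp

/-- Averaging over `i ↔ m - i` replaces the multiplicities `m - i` by `m / 2`. -/
theorem two_mul_sum_Ico (a : ℕ → ℕ) (m : ℕ) (h : ∀ i ∈ Ico 1 m, a (m - i) = a i) :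
    2 * ∑ i ∈ Ico 1 m, (m - i) * a i = m * ∑ i ∈ Ico 1 m, a i := by
  have h1 : ∑ i ∈ Ico 1 m, (m - i) * a i = ∑ i ∈ Ico 1 m, i * a i := by
    refine Finset.sum_nbij' (fun i => m - i) (fun i => m - i) ?_ ?_ ?_ ?_ ?_
    · intro i hi; simp only [Finset.mem_Ico] at *; omega
    · intro i hi; simp only [Finset.mem_Ico] at *; omega
    · intro i hi; simp only [Finset.mem_Ico] at *; omega
    · intro i hi; simp only [Finset.mem_Ico] at *; omega
    · intro i hi; rw [h i hi]
  rw [two_mul]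
  nth_rewrite 2 [h1]
  rw [← Finset.sum_add_distrib, Finset.mul_sum]
  refine Finset.sum_congr rfl fun i hi => ?_
  rw [Finset.mem_Ico] at hi
  rw [← add_mul, Nat.sub_add_cancel hi.2.le]

/-- The product `(T₁ ⋯ T_{k-1}) (T₁ ⋯ T_{k-2}) ⋯ (T₁)`, for the standard reduced word of the
longest element of the symmetric group on `k` letters. The index is shifted: the value at `k`
belongs to `k + 1` letters. -/
def longestWord {M : Type*} [Monoid M] (T : ℕ → M) : ℕ → M
  | 0 => 1
  | k + 1 => ((List.range (k + 1)).map fun i => T (i + 1)).prod * longestWord T k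

theorem abs_det_longestWord {W : Type*} [AddCommGroup W] [Module ℝ W]
    (T : ℕ → Module.End ℝ W) (q : ℝ) (a : ℕ → ℕ) (k : ℕ)
    (h : ∀ i ∈ Ico 1 (k + 1), |LinearMap.det (T i)| = q ^ a i) :
    |LinearMap.det (longestWord T k)| =
      q ^ ∑ j ∈ range (k + 1), ∑ i ∈ Ico 1 (j + 1), a i := by
  have hrow : ∀ j, j ≤ k →
      |LinearMap.det ((List.range j).map fun i => T (i + 1)).prod| =
        q ^ ∑ i ∈ Ico 1 (j + 1), a i := by
    intro j hj
    induction j with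
    | zero => simp
    | succ j ih =>
      rw [List.range_succ, List.map_append, List.prod_append, map_mul, abs_mul, ih (by omega),
        Finset.sum_Ico_succ_top (b := j + 1) (by omega), pow_add]
      congr 1
      simpa using h (j + 1) (by rw [Finset.mem_Ico]; omega)
  induction k with
  | zero => simp [longestWord]
  | succ k ih =>
    rw [longestWord, map_mul, abs_mul, hrow (k + 1) le_rfl,
      ih (fun i hi => h i (by rw [Finset.mem_Ico] at *; omega)) (fun j hj => hrow j (by omega)),
      Finset.sum_range_succ _ (k + 1), pow_add, mul_comm]

/-- The eigenvalue bound. `W` plays the role of an eigenspace of `A²` without a common fixed vector of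
the `T i`. If `a i = dim ker (T i - q)` and `d = dim W`, then `μ ^ d = (det A)² = q ^ (m ∑ a i)` by the
symmetry `a (m - i) = a i`, while the codimensions `d - a i` of the `m - 1` kernels, whose
intersection is zero, add up to at least `d`. -/
theorem eigenvalue_le_of_hecke {W : Type*} [AddCommGroup W] [Module ℝ W] [FiniteDimensional ℝ W]
    [Nontrivial W] (q μ : ℝ) (hq : 1 < q) (m : ℕ) (hm : 2 ≤ m) (T : ℕ → Module.End ℝ W)
    (A : Module.End ℝ W) (hT : ∀ i ∈ Ico 1 m, T i * T i = (q - 1) • T i + q • 1)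
    (hA : A = longestWord T (m - 1)) (hcomm : ∀ i ∈ Ico 1 m, A * T i = T (m - i) * A)
    (hAA : A * A = μ • 1)
    (hfix : ∀ x : W, (∀ i ∈ Ico 1 m, T i x = q • x) → x = 0) :
    μ ≤ q ^ (m * (m - 2)) := by
  have hq0 : 0 < q := by linarith
  set a : ℕ → ℕ := fun i => finrank ℝ (LinearMap.ker (T i - q • (1 : Module.End ℝ W))) with ha
  set d := finrank ℝ W with hd
  have hdpos : 0 < d := finrank_pos
  have hdet : ∀ i ∈ Ico 1 m, |LinearMap.det (T i)| = q ^ a i := fun i hi =>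
    abs_det_of_quadratic (T i) q hq0.le (hT i hi)
  have hdetA : |LinearMap.det A| = q ^ ∑ i ∈ Ico 1 m, (m - i) * a i := by
    rw [hA, abs_det_longestWord T q a (m - 1) (by rwa [Nat.sub_add_cancel (by omega)]),
      Nat.sub_add_cancel (by omega), sum_sum_Ico]
  have hA0 : LinearMap.det A ≠ 0 := by
    rw [← abs_pos, hdetA]; positivity
  -- conjugation by `A` exchanges `T i` and `T (m - i)`
  have hsymm : ∀ i ∈ Ico 1 m, a (m - i) = a i := by
    intro i hi
    have h1 := congrArg LinearMap.det (hcomm i hi)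
    rw [map_mul, map_mul, mul_comm] at h1
    have h2 := mul_right_cancel₀ hA0 h1
    have h3 := hdet i hi
    rw [h2, hdet (m - i) (by rw [Finset.mem_Ico] at *; omega)] at h3
    exact pow_right_injective₀ hq0 hq.ne' h3
  -- the subspaces `ker (T i - q)` meet in zero, so their codimensions add up to at least `d`
  have hsum : ∑ i ∈ Ico 1 m, a i ≤ (m - 2) * d := by
    have h1 := finrank_add_sum_le
      (fun i => LinearMap.ker (T i - q • (1 : Module.End ℝ W))) (Ico 1 m)
    have h2 : (Ico 1 m).inf (fun i => LinearMap.ker (T i - q • (1 : Module.End ℝ W))) = ⊥ := by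
      rw [eq_bot_iff]
      intro x hx
      rw [Submodule.mem_bot]
      refine hfix x fun i hi => ?_
      have h3 := Finset.inf_le
        (f := fun i => LinearMap.ker (T i - q • (1 : Module.End ℝ W))) hi hx
      simpa [LinearMap.mem_ker, sub_eq_zero] using h3
    rw [h2, finrank_bot, zero_add, Nat.card_Ico] at h1
    obtain ⟨r, rfl⟩ : ∃ r, m = r + 2 := ⟨m - 2, by omega⟩
    have h4 : r + 2 - 1 = r + 1 := rfl
    rw [h4, add_mul] at h1
    simp only [Nat.add_sub_cancel]
    simp only [ha, hd] at *
    omega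
  have hμ : μ ^ d = q ^ (m * ∑ i ∈ Ico 1 m, a i) := by
    have := congrArg LinearMap.det hAA
    rw [map_mul, LinearMap.det_smul, map_one, mul_one] at this
    rw [← this, ← abs_mul_abs_self, hdetA, ← pow_add, ← two_mul, two_mul_sum_Ico a m hsymm]
  by_contra hlt
  have h5 := pow_lt_pow_left₀ (not_le.1 hlt) (by positivity) hdpos.ne'
  rw [hμ, ← pow_mul] at h5
  have h6 := pow_le_pow_right₀ hq.le (Nat.mul_le_mul_left m hsum)
  rw [← mul_assoc] at h6
  linarith

/-! ### A norm bound on the vectors of sum zero -/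

/-- A symmetric operator is bounded, as a quadratic form, by any bound on its eigenvalues. -/
theorem inner_le_of_eigenvalue_le {E : Type*} [NormedAddCommGroup E] [InnerProductSpace ℝ E]
    [FiniteDimensional ℝ E] (B : E →ₗ[ℝ] E) (hB : B.IsSymmetric) (M : ℝ)
    (h : ∀ (μ : ℝ) (x : E), x ≠ 0 → B x = μ • x → μ ≤ M) (x : E) :
    inner ℝ (B x) x ≤ M * inner ℝ x x := by
  set b := hB.eigenvectorBasis rfl
  have hb : ∀ i, B (b i) = hB.eigenvalues rfl i • b i := fun i => hB.apply_eigenvectorBasis rfl i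
  rw [← b.sum_inner_mul_inner (B x) x, ← b.sum_inner_mul_inner x x, Finset.mul_sum]
  refine Finset.sum_le_sum fun i _ => ?_
  have h1 : inner ℝ (B x) (b i) = hB.eigenvalues rfl i * inner ℝ x (b i) := by
    rw [hB x (b i), hb, inner_smul_right]
  rw [h1, real_inner_comm x (b i), mul_assoc]
  exact mul_le_mul_of_nonneg_right (h _ (b i) (b.orthonormal.ne_zero i) (hb i))
    (mul_self_nonneg _)

/-- The endomorphisms that preserve the subspace `W`. -/
def preserving {E : Type*} [AddCommGroup E] [Module ℝ E] (W : Submodule ℝ E) :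
    Submonoid (Module.End ℝ E) where
  carrier := {X | ∀ x ∈ W, X x ∈ W}
  mul_mem' := fun hX hY x hx => hX _ (hY x hx)
  one_mem' := fun _ hx => hx

/-- Restriction to a preserved subspace, as a monoid homomorphism. -/
def restrictHom {E : Type*} [AddCommGroup E] [Module ℝ E] (W : Submodule ℝ E) :
    preserving W →* Module.End ℝ W where
  toFun X := X.1.restrict X.2
  map_one' := rfl
  map_mul' _ _ := rfl

theorem map_longestWord {M N : Type*} [Monoid M] [Monoid N] (f : M →* N) (T : ℕ → M) (k : ℕ) :
    f (longestWord T k) = longestWord (fun i => f (T i)) k := by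
  induction k with
  | zero => simp [longestWord]
  | succ k ih =>
    rw [longestWord, longestWord, map_mul, ih, map_list_prod, List.map_map]
    rfl

/-- The norm of `A` on the vectors of sum zero. Since `A` conjugates `T i` to `T (m - i)`, its square
commutes with every `T i`, so each eigenspace of `A²` on the vectors of sum zero is a module for the `T i`
to which `eigenvalue_le_of_hecke` applies. -/
theorem dotProduct_mulVec_le_of_hecke {ι : Type*} [Fintype ι] [DecidableEq ι] (q : ℝ) (hq : 1 < q)
    (m : ℕ) (hm : 2 ≤ m) (T : ℕ → Matrix ι ι ℝ) (A : Matrix ι ι ℝ)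
    (hTs : ∀ i, (T i).transpose = T i) (hAs : A.transpose = A)
    (hT0 : ∀ i, i ∉ Ico 1 m → T i = 0)
    (hT : ∀ i ∈ Ico 1 m, T i * T i = (q - 1) • T i + q • 1)
    (hrow : ∀ i ∈ Ico 1 m, (T i).mulVec (fun _ => 1) = fun _ => q)
    (hA : A = longestWord T (m - 1)) (hcomm : ∀ i ∈ Ico 1 m, A * T i = T (m - i) * A)
    (hfix : ∀ f : ι → ℝ, ∑ c, f c = 0 → (∀ i ∈ Ico 1 m, (T i).mulVec f = q • f) → f = 0)
    (f : ι → ℝ) (hf : ∑ c, f c = 0) :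
    (A.mulVec f) ⬝ᵥ (A.mulVec f) ≤ q ^ (m * (m - 2)) * (f ⬝ᵥ f) := by
  let φ : Matrix ι ι ℝ ≃ₐ[ℝ] Module.End ℝ (EuclideanSpace ℝ ι) :=
    Matrix.toLinAlgEquiv (EuclideanSpace.basisFun ι ℝ).toBasis
  have hφ : ∀ (X : Matrix ι ι ℝ) (x : EuclideanSpace ℝ ι),
      φ X x = WithLp.toLp 2 (X.mulVec x.ofLp) := by
    intro X x
    ext i
    simp [φ, Matrix.toLinAlgEquiv_apply, Matrix.mulVec, dotProduct, Pi.single_apply]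
  have hinner : ∀ x y : EuclideanSpace ℝ ι, inner ℝ x y = x.ofLp ⬝ᵥ y.ofLp := by
    intro x y
    rw [EuclideanSpace.inner_eq_star_dotProduct, dotProduct_comm]
    simp
  let U : Submodule ℝ (EuclideanSpace ℝ ι) :=
    { carrier := {x | ∑ c, x c = 0}
      add_mem' := fun {x y} hx hy => by
        simp only [Set.mem_ofPred_eq] at *
        simp [Finset.sum_add_distrib, hx, hy]
      zero_mem' := by simp
      smul_mem' := fun r x hx => by
        simp only [Set.mem_ofPred_eq] at *
        simp [← Finset.mul_sum, hx] }
  have memU : ∀ x : EuclideanSpace ℝ ι, x ∈ U ↔ (fun _ => 1) ⬝ᵥ x.ofLp = 0 := by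
    intro x
    simp [U, dotProduct]
  have hTU : ∀ i, φ (T i) ∈ preserving U := by
    intro i x hx
    by_cases hi : i ∈ Ico 1 m
    · rw [memU] at *
      rw [hφ, Matrix.dotProduct_mulVec, ← Matrix.mulVec_transpose, hTs, hrow i hi]
      have : (fun _ : ι => q) = q • (fun _ => (1 : ℝ)) := by ext; simp
      rw [this, smul_dotProduct, hx, smul_zero]
    · rw [hT0 i hi, map_zero]
      exact U.zero_mem
  have hword : φ A = longestWord (fun i => φ (T i)) (m - 1) := by
    rw [hA]
    exact map_longestWord
      (φ.toAlgHom : Matrix ι ι ℝ →* Module.End ℝ (EuclideanSpace ℝ ι)) T (m - 1)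
  have hAW : ∀ W, (∀ i, φ (T i) ∈ preserving W) → φ A ∈ preserving W := by
    intro W hW
    rw [hword]
    have := map_longestWord (preserving W).subtype (fun i => ⟨φ (T i), hW i⟩) (m - 1)
    simp only [Submonoid.subtype_apply] at this
    rw [← this]
    exact SetLike.coe_mem _
  have hAAU : ∀ x ∈ U, φ (A * A) x ∈ U := by
    rw [map_mul]
    exact (preserving U).mul_mem (hAW U hTU) (hAW U hTU)
  have hAcomm : ∀ i, A * A * T i = T i * (A * A) := by
    intro i
    by_cases hi : i ∈ Ico 1 m
    · have hi' : m - i ∈ Ico 1 m := by rw [Finset.mem_Ico] at *; omega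
      have h1 := hcomm _ hi'
      rw [Nat.sub_sub_self (by rw [Finset.mem_Ico] at hi; omega)] at h1
      rw [mul_assoc, hcomm i hi, ← mul_assoc, h1, mul_assoc]
    · rw [hT0 i hi, mul_zero, zero_mul]
  have hsymm : ∀ X : Matrix ι ι ℝ, X.transpose = X → (φ X).IsSymmetric := by
    intro X hX x y
    rw [hinner, hinner, hφ, hφ]
    simp only
    rw [Matrix.dotProduct_mulVec, ← Matrix.mulVec_transpose, hX]
  have hB : (φ (A * A)).IsSymmetric := hsymm _ (by rw [Matrix.transpose_mul, hAs])
  have key := inner_le_of_eigenvalue_le ((φ (A * A)).restrict hAAU) (hB.restrict_invariant hAAU)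
    (q ^ (m * (m - 2))) ?_ ⟨WithLp.toLp 2 f, (memU _).2 (by simpa [dotProduct] using hf)⟩
  · have h1 : φ (A * A) (WithLp.toLp 2 f) = φ A (φ A (WithLp.toLp 2 f)) := by
      rw [map_mul]; rfl
    rw [Submodule.coe_inner, Submodule.coe_inner, LinearMap.coe_restrict_apply] at key
    simp only at key
    rw [h1, hsymm A hAs, hinner, hinner, hφ] at key
    exact key
  · intro μ x hx hμ
    -- `W` is the `μ`-eigenspace of `A²` in `U`; it is preserved by all `T i`
    let W : Submodule ℝ (EuclideanSpace ℝ ι) := U ⊓ LinearMap.ker (φ (A * A) - μ • 1)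
    have memW : ∀ x, x ∈ W ↔ x ∈ U ∧ φ (A * A) x = μ • x := by
      intro x
      simp [W, LinearMap.mem_ker, sub_eq_zero]
    have hTW : ∀ i, φ (T i) ∈ preserving W := by
      intro i x hx
      rw [memW] at *
      refine ⟨hTU i x hx.1, ?_⟩
      have h1 : φ (A * A) (φ (T i) x) = φ (T i) (φ (A * A) x) := by
        rw [← Module.End.mul_apply, ← map_mul, hAcomm, map_mul, Module.End.mul_apply]
      rw [h1, hx.2, map_smul]
    have hxW : (x : EuclideanSpace ℝ ι) ∈ W :=
      (memW _).2 ⟨x.2, by simpa using congrArg Subtype.val hμ⟩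
    have : Nontrivial W := ⟨⟨x, hxW⟩, 0, fun h =>
      hx (Subtype.ext (congrArg (fun w : W => (w : EuclideanSpace ℝ ι)) h))⟩
    let T' : ℕ → preserving W := fun i => ⟨φ (T i), hTW i⟩
    have hwordW : (⟨φ A, hAW W hTW⟩ : preserving W) = longestWord T' (m - 1) := by
      apply Subtype.ext
      have := map_longestWord (preserving W).subtype T' (m - 1)
      simp only [Submonoid.subtype_apply] at this
      rw [this]
      exact hword
    refine eigenvalue_le_of_hecke q μ hq m hm (fun i => restrictHom W (T' i))
      (restrictHom W ⟨φ A, hAW W hTW⟩) ?_ ?_ ?_ ?_ ?_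
    · intro i hi
      ext w : 2
      have := LinearMap.congr_fun (congrArg φ (hT i hi)) w.1
      simp only [map_mul, map_add, map_smul, map_one] at this
      exact this
    · rw [hwordW, map_longestWord]
    · intro i hi
      have h1 : (⟨φ A, hAW W hTW⟩ : preserving W) * T' i = T' (m - i) * ⟨φ A, hAW W hTW⟩ := by
        apply Subtype.ext
        change φ A * φ (T i) = φ (T (m - i)) * φ A
        rw [← map_mul, hcomm i hi, map_mul]
      rw [← map_mul, h1, map_mul]
    · ext w : 2
      have h1 := ((memW w.1).1 w.2).2
      rw [map_mul] at h1
      exact h1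
    · intro w hw
      have h1 : w.1.ofLp = 0 := by
        refine hfix _ ?_ fun i hi => ?_
        · exact ((memW w.1).1 w.2).1
        · have h2 : φ (T i) w.1 = q • w.1 := congrArg Subtype.val (hw i hi)
          rw [hφ] at h2
          exact congrArg WithLp.ofLp h2
      apply Subtype.ext
      exact WithLp.ofLp_injective 2 h1

/-! ### Chambers and panels -/

section Chambers

set_option linter.unusedSectionVars false

variable {K V : Type*} [Field K] [AddCommGroup V] [Module K V] [FiniteDimensional K V] {c : ℕ}

theorem finrank_map_add_inf_ker {W : Type*} [AddCommGroup W] [Module K W] (f : V →ₗ[K] W)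
    (X : Submodule K V) :
    finrank K (X.map f) + finrank K (X ⊓ LinearMap.ker f : Submodule K V) = finrank K X := by
  have h := LinearMap.finrank_range_add_finrank_ker (f.domRestrict X)
  rw [LinearMap.range_domRestrict, LinearMap.ker_domRestrict] at h
  rw [← h, ← Submodule.map_comap_subtype, Submodule.finrank_map_subtype_eq]

theorem finrank_comap_subtype (S X : Submodule K V) :
    finrank K (X.comap S.subtype) = finrank K (S ⊓ X : Submodule K V) := by
  rw [← Submodule.map_comap_subtype, Submodule.finrank_map_subtype_eq]

theorem finrank_map_mkQ {A X : Submodule K V} (h : A ≤ X) :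
    finrank K (X.map A.mkQ) + finrank K A = finrank K X := by
  have := finrank_map_add_inf_ker A.mkQ X
  rwa [Submodule.ker_mkQ, inf_eq_right.2 h] at this

theorem finrank_comap_mkQ (A : Submodule K V) (H : Submodule K (V ⧸ A)) :
    finrank K (H.comap A.mkQ) = finrank K H + finrank K A := by
  have h1 : A ≤ H.comap A.mkQ := Submodule.le_comap_mkQ A H
  rw [← finrank_map_mkQ h1, Submodule.map_comap_eq_of_surjective A.mkQ_surjective]

/-- The subspaces strictly between two subspaces `A ≤ B` with `dim B = dim A + 2` correspond to
the points of the projective line of `B / A`. -/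
theorem card_between [Fintype K] {A B : Submodule K V} (hAB : A ≤ B)
    (hd : finrank K B = finrank K A + 2) :
    Nat.card {X : Submodule K V // A ≤ X ∧ X ≤ B ∧ finrank K X = finrank K A + 1} =
      Fintype.card K + 1 := by
  set B' := B.map A.mkQ with hB'
  have hB'2 : finrank K B' = 2 := by
    have := finrank_map_mkQ hAB
    rw [← hB'] at this
    omega
  have h1 : Nat.card {H : Submodule K B' // finrank K H = 1} = Fintype.card K + 1 := by
    rw [← Nat.card_eq_fintype_card, ← Projectivization.card_of_finrank_two K B' hB'2]
    exact Nat.card_congr (Projectivization.equivSubmodule K B').symm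
  rw [← h1]
  have hle : ∀ X, X ≤ B → X.map A.mkQ ≤ B' := fun X hX => Submodule.map_mono hX
  refine Nat.card_congr
    { toFun := fun X => ⟨(X.1.map A.mkQ).comap B'.subtype, ?_⟩
      invFun := fun H => ⟨(H.1.map B'.subtype).comap A.mkQ, ?_, ?_, ?_⟩
      left_inv := ?_
      right_inv := ?_ }
  · have := finrank_map_mkQ X.2.1
    rw [finrank_comap_subtype, inf_eq_right.2 (hle _ X.2.2.1)]
    have := X.2.2.2
    omega
  · exact Submodule.le_comap_mkQ _ _
  · have h2 : H.1.map B'.subtype ≤ B' := Submodule.map_subtype_le _ _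
    refine (Submodule.comap_mono h2).trans ?_
    rw [hB', Submodule.comap_map_mkQ, sup_eq_right.2 hAB]
  · rw [finrank_comap_mkQ, Submodule.finrank_map_subtype_eq, H.2, add_comm]
  · intro X
    apply Subtype.ext
    simp only
    rw [Submodule.map_comap_subtype, inf_eq_right.2 (hle _ X.2.2.1), Submodule.comap_map_mkQ,
      sup_eq_right.2 X.2.1]
  · intro H
    apply Subtype.ext
    simp only
    rw [Submodule.map_comap_eq_of_surjective A.mkQ_surjective,
      Submodule.comap_map_eq_of_injective B'.injective_subtype]

namespace Chamber

theorem mono (C : Chamber K V c) {i j : ℕ} (h : i ≤ j) : C.1 i ≤ C.1 j := C.2.1 h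

theorem finrank_eq (C : Chamber K V c) {i : ℕ} (h : i ≤ c) : finrank K (C.1 i) = i := C.2.2.1 i h

theorem eq_top (C : Chamber K V c) {i : ℕ} (h : c ≤ i) : C.1 i = ⊤ := C.2.2.2 i h

theorem eq_bot (C : Chamber K V c) : C.1 0 = ⊥ :=
  Submodule.finrank_eq_zero.1 (C.finrank_eq (Nat.zero_le c))

theorem finrank_space (C : Chamber K V c) : finrank K V = c := by
  rw [← finrank_top K V, ← C.eq_top le_rfl, C.finrank_eq le_rfl]

/-- Members of equal dimension of two chambers agree as soon as they are comparable. -/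
theorem eq_of_le {C D : Chamber K V c} {i : ℕ} (hi : i ≤ c) (h : C.1 i ≤ D.1 i) :
    C.1 i = D.1 i :=
  Submodule.eq_of_le_of_finrank_eq h (by rw [C.finrank_eq hi, D.finrank_eq hi])

/-- The chamber obtained from `C` by replacing its `i`-dimensional member by `X`. -/
noncomputable def update (C : Chamber K V c) (i : ℕ) (h0 : 1 ≤ i) (hc : i < c) (X : Submodule K V)
    (h1 : C.1 (i - 1) ≤ X) (h2 : X ≤ C.1 (i + 1)) (h3 : finrank K X = i) : Chamber K V c :=
  ⟨Function.update C.1 i X, by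
    refine ⟨monotone_nat_of_le_succ fun j => ?_, fun j hj => ?_, fun j hj => ?_⟩
    · rcases eq_or_ne j i with rfl | hj
      · rw [Function.update_self, Function.update_of_ne (by omega)]
        exact h2
      · rw [Function.update_of_ne hj]
        rcases eq_or_ne (j + 1) i with rfl | hj'
        · rw [Function.update_self]
          exact h1
        · rw [Function.update_of_ne hj']
          exact C.mono (Nat.le_succ j)
    · rcases eq_or_ne j i with rfl | hj'
      · rw [Function.update_self, h3]
      · rw [Function.update_of_ne hj', C.finrank_eq hj]
    · rw [Function.update_of_ne (by omega), C.eq_top hj]⟩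

/-- `C` and `D` lie in a common `i`-panel: they agree except possibly in dimension `i`. -/
def SamePanel (i : ℕ) (C D : Chamber K V c) : Prop := ∀ j, j ≠ i → C.1 j = D.1 j

theorem SamePanel.eq {i : ℕ} {C D : Chamber K V c} (h : SamePanel i C D) (hi : C.1 i = D.1 i) :
    C = D := by
  apply Subtype.ext
  funext j
  rcases eq_or_ne j i with rfl | hj
  · exact hi
  · exact h j hj

theorem samePanel_update (C : Chamber K V c) (i : ℕ) (h0 : 1 ≤ i) (hc : i < c)
    (X : Submodule K V) (h1 : C.1 (i - 1) ≤ X) (h2 : X ≤ C.1 (i + 1)) (h3 : finrank K X = i) :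
    SamePanel i C (C.update i h0 hc X h1 h2 h3) := fun j hj => by
  simp [update, Function.update_of_ne hj]

theorem update_self (C : Chamber K V c) (i : ℕ) (h0 : 1 ≤ i) (hc : i < c)
    (X : Submodule K V) (h1 : C.1 (i - 1) ≤ X) (h2 : X ≤ C.1 (i + 1)) (h3 : finrank K X = i) :
    (C.update i h0 hc X h1 h2 h3).1 i = X := by
  simp [update]

/-- An `i`-panel with `1 ≤ i < c` consists of `q + 1` chambers. -/
theorem card_panel [Fintype K] (C : Chamber K V c) {i : ℕ} (h0 : 1 ≤ i) (hc : i < c) :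
    Nat.card {D : Chamber K V c // SamePanel i C D} = Fintype.card K + 1 := by
  have e1 := C.finrank_eq (i := i - 1) (by omega)
  have e2 := C.finrank_eq (i := i + 1) (by omega)
  rw [← card_between (C.mono (show i - 1 ≤ i + 1 by omega)) (by omega)]
  refine Nat.card_congr
    { toFun := fun D => ⟨D.1.1 i, ?_, ?_, ?_⟩
      invFun := fun X => ⟨C.update i h0 hc X.1 X.2.1 X.2.2.1 ?_, samePanel_update _ _ _ _ _ _ _ _⟩
      left_inv := ?_
      right_inv := ?_ }
  · rw [D.2 (i - 1) (by omega)]; exact D.1.mono (by omega)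
  · rw [D.2 (i + 1) (by omega)]; exact D.1.mono (by omega)
  · rw [D.1.finrank_eq hc.le, e1]; omega
  · rw [X.2.2.2, e1]; omega
  · intro D
    apply Subtype.ext
    refine SamePanel.eq (i := i) (fun j hj => ?_) (by simp [update])
    simp only [update, Function.update_of_ne hj, D.2 j hj]
  · intro X
    exact Subtype.ext (by simp [update])

instance instFinite [Finite K] : Finite (Chamber K V c) := by
  have : Finite V := Module.finite_of_finite K
  have : Finite (Submodule K V) := inferInstance
  refine Finite.of_injective (β := Fin c → Submodule K V) (fun C i => C.1 i) fun C D h => ?_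
  apply Subtype.ext
  funext j
  by_cases hj : j < c
  · exact congrFun h ⟨j, hj⟩
  · rw [C.eq_top (not_lt.1 hj), D.eq_top (not_lt.1 hj)]

noncomputable instance instFintype [Finite K] : Fintype (Chamber K V c) := Fintype.ofFinite _

end Chamber
end Chambers

/-! ### Opposition as a word in the adjacency matrices -/

section Opposition

set_option linter.unusedSectionVars false

variable {K V : Type*} [Field K] [Fintype K] [AddCommGroup V] [Module K V]
  [FiniteDimensional K V] {c : ℕ}

/-- The 0-1 matrix of a relation. -/
noncomputable def indMat {ι : Type*} (R : ι → ι → Prop) : Matrix ι ι ℝ :=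
  Matrix.of fun a b => if R a b then 1 else 0

theorem indMat_mul_apply {ι : Type*} [Fintype ι] (R R' : ι → ι → Prop) (a b : ι) :
    (indMat R * indMat R') a b = (Nat.card {e // R a e ∧ R' e b} : ℝ) := by
  rw [Matrix.mul_apply, Nat.card_eq_fintype_card, Fintype.card_subtype, Finset.card_filter]
  push_cast
  refine Finset.sum_congr rfl fun e _ => ?_
  by_cases h1 : R a e <;> by_cases h2 : R' e b <;> simp [indMat, h1, h2]

theorem indMat_congr {ι : Type*} {R R' : ι → ι → Prop} (h : ∀ a b, R a b ↔ R' a b) :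
    indMat R = indMat R' := by
  ext a b
  simp [indMat, h]

namespace Chamber

/-- Two distinct chambers in a common `i`-panel. -/
def Adj (i : ℕ) (C D : Chamber K V c) : Prop := SamePanel i C D ∧ C ≠ D

theorem SamePanel.symm {i : ℕ} {C D : Chamber K V c} (h : SamePanel i C D) : SamePanel i D C :=
  fun j hj => (h j hj).symm

theorem SamePanel.trans {i : ℕ} {C D E : Chamber K V c} (h : SamePanel i C D)
    (hDE : SamePanel i D E) : SamePanel i C E :=
  fun j hj => (h j hj).trans (hDE j hj)

/-- An interpolation between opposition inside the `k`-dimensional member and opposition inside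
the `(k - 1)`-dimensional member: `C` and `D` agree from dimension `k` on, the members of `C` of
dimension less than `j` already lie in `D_{k-1}` and are in general position to `D` there, and the
members of dimension `j, …, k - 1` are in general position to `D` inside `D_k`. -/
def Interp (k j : ℕ) (C D : Chamber K V c) : Prop :=
  (∀ i, k ≤ i → C.1 i = D.1 i) ∧
    (∀ i, 1 ≤ i → i < j → C.1 i ⊓ D.1 (k - 1 - i) = ⊥ ∧ C.1 i ≤ D.1 (k - 1)) ∧
    ∀ i, 1 ≤ i → j ≤ i → i < k → C.1 i ⊓ D.1 (k - i) = ⊥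

/-- By dimensions, `Z` cannot contain both `X` and `Y` if these are in direct sum and `Z` is too small. -/
theorem not_le_of_inf_eq_bot {X Y Z : Submodule K V} (h : X ⊓ Y = ⊥) (hY : Y ≤ Z)
    (hd : finrank K Z < finrank K X + finrank K Y) : ¬ X ≤ Z := by
  intro hX
  have h1 := Submodule.finrank_sup_add_finrank_inf_eq X Y
  rw [h, finrank_bot] at h1
  have h2 := Submodule.finrank_mono (sup_le hX hY)
  omega

/-- The hyperplane `D_{k-1}` of `D_k` cuts `C_{j+1}` in dimension `j`. -/
theorem Interp.finrank_inf {k j : ℕ} (hj : 1 ≤ j) (hjk : j < k) (hk : k ≤ c) {C D : Chamber K V c}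
    (h1 : ∀ i, k ≤ i → C.1 i = D.1 i)
    (h3 : ∀ i, j + 1 ≤ i → i < k → C.1 i ⊓ D.1 (k - i) = ⊥) :
    finrank K (C.1 (j + 1) ⊓ D.1 (k - 1) : Submodule K V) = j := by
  have hnle : ¬ C.1 (j + 1) ≤ D.1 (k - 1) := by
    rcases eq_or_lt_of_le (show j + 1 ≤ k from hjk) with rfl | hlt
    · intro h
      have := Submodule.finrank_mono h
      rw [C.finrank_eq (by omega), D.finrank_eq (by omega)] at this
      omega
    · refine not_le_of_inf_eq_bot (h3 (j + 1) le_rfl hlt) (D.mono (by omega)) ?_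
      rw [C.finrank_eq (by omega), D.finrank_eq (by omega), D.finrank_eq (by omega)]
      omega
  have hle : C.1 (j + 1) ≤ D.1 k := by
    rw [← h1 k le_rfl]; exact C.mono (by omega)
  have hs : C.1 (j + 1) ⊔ D.1 (k - 1) ≤ D.1 k := sup_le hle (D.mono (by omega))
  have hlt : D.1 (k - 1) < C.1 (j + 1) ⊔ D.1 (k - 1) :=
    lt_of_le_of_ne le_sup_right fun h => hnle (h ▸ le_sup_left)
  have e1 := Submodule.finrank_mono hs
  have e2 := Submodule.finrank_lt_finrank_of_lt hlt
  have e3 := Submodule.finrank_sup_add_finrank_inf_eq (C.1 (j + 1)) (D.1 (k - 1))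
  rw [D.finrank_eq (by omega)] at e1 e2
  rw [C.finrank_eq (by omega), D.finrank_eq (by omega)] at e3
  omega

/-- One letter of the word: if `C` and `D` are related by `Interp k j`, then `C` has exactly one
`j`-neighbour related to `D` by `Interp k (j + 1)`, the one with `j`-dimensional member
`C_{j+1} ∩ D_{k-1}`; otherwise it has none. -/
theorem adj_mul_interp {k j : ℕ} (hj : 1 ≤ j) (hjk : j < k) (hk : k ≤ c) :
    indMat (Adj j) * indMat (Interp (K := K) (V := V) (c := c) k (j + 1)) =
      indMat (Interp k j) := by
  ext C D
  rw [indMat_mul_apply]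
  -- a neighbour `E` of `C` on the right side has `E_j = C_{j+1} ∩ D_{k-1}`
  have huniq : ∀ E : Chamber K V c, Adj j C E → Interp k (j + 1) E D →
      E.1 j = C.1 (j + 1) ⊓ D.1 (k - 1) := by
    intro E hE hI
    refine Submodule.eq_of_le_of_finrank_eq (le_inf ?_ (hI.2.1 j hj (by omega)).2) ?_
    · rw [hE.1 (j + 1) (by omega)]; exact E.mono (by omega)
    · rw [E.finrank_eq (by omega), Interp.finrank_inf hj hjk hk]
      · intro i hi; rw [hE.1 i (by omega), hI.1 i hi]
      · intro i hi hik; rw [hE.1 i (by omega), hI.2.2 i (by omega) hi hik]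
  by_cases h : Interp k j C D
  · obtain ⟨h1, h2, h3⟩ := h
    have hd := Interp.finrank_inf hj hjk hk h1 fun i hi hik => h3 i (by omega) (by omega) hik
    have hlow : C.1 (j - 1) ≤ D.1 (k - 1) := by
      rcases Nat.eq_zero_or_pos (j - 1) with h0 | h0
      · rw [h0, C.eq_bot]; exact bot_le
      · exact (h2 (j - 1) h0 (by omega)).2
    let E := C.update j hj (by omega) (C.1 (j + 1) ⊓ D.1 (k - 1))
      (le_inf (C.mono (by omega)) hlow) inf_le_left hd
    have hE : E.1 j = C.1 (j + 1) ⊓ D.1 (k - 1) := update_self _ _ _ _ _ _ _ _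
    have hCE : SamePanel j C E := samePanel_update _ _ _ _ _ _ _ _
    have hne : C ≠ E := by
      intro hCE'
      have hle : C.1 j ≤ D.1 (k - 1) := by
        rw [hCE', hE]; exact inf_le_right
      refine not_le_of_inf_eq_bot (h3 j hj le_rfl hjk) (D.mono (by omega)) ?_ hle
      rw [C.finrank_eq (by omega), D.finrank_eq (by omega), D.finrank_eq (by omega)]
      omega
    have hEI : Interp k (j + 1) E D := by
      refine ⟨fun i hi => ?_, fun i hi hij => ?_, fun i hi hij hik => ?_⟩
      · rw [← hCE i (by omega), h1 i hi]
      · rcases eq_or_ne i j with rfl | hne'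
        · rw [hE]
          refine ⟨?_, inf_le_right⟩
          rcases eq_or_lt_of_le (show i + 1 ≤ k from hjk) with rfl | hlt
          · rw [show i + 1 - 1 - i = 0 by omega, D.eq_bot, inf_bot_eq]
          · rw [eq_bot_iff, ← h3 (i + 1) (by omega) (by omega) hlt]
            refine inf_le_inf inf_le_left (le_of_eq ?_)
            rw [show k - 1 - i = k - (i + 1) by omega]
        · rw [← hCE i hne']
          exact h2 i hi (by omega)
      · rw [← hCE i (by omega)]
        exact h3 i hi (by omega) hik
    have : Nat.card {E // Adj j C E ∧ Interp k (j + 1) E D} = 1 := by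
      rw [Nat.card_eq_one_iff_unique]
      refine ⟨⟨fun E₁ E₂ => Subtype.ext ?_⟩, ⟨E, ⟨hCE, hne⟩, hEI⟩⟩
      refine (E₁.2.1.1.symm.trans E₂.2.1.1).eq ?_
      rw [huniq _ E₁.2.1 E₁.2.2, huniq _ E₂.2.1 E₂.2.2]
    rw [this]
    simp only [indMat, Matrix.of_apply]
    rw [if_pos (show Interp k j C D from ⟨h1, h2, h3⟩), Nat.cast_one]
  · have : IsEmpty {E // Adj j C E ∧ Interp k (j + 1) E D} := by
      refine ⟨fun ⟨E, hE, hI⟩ => h ⟨fun i hi => ?_, fun i hi hij => ?_, fun i hi hij hik => ?_⟩⟩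
      · rw [hE.1 i (by omega), hI.1 i hi]
      · rw [hE.1 i (by omega)]
        exact hI.2.1 i hi (by omega)
      · rcases eq_or_ne i j with rfl | hne
        · -- `C_i ∩ D_{k-i}` lies in `C_i ∩ E_i = C_{i-1} = E_{i-1}`
          have hCE : C.1 i ⊓ E.1 i ≤ E.1 (i - 1) := by
            have hlt : C.1 i ⊓ E.1 i < C.1 i := by
              refine lt_of_le_of_ne inf_le_left fun h' => hE.2 (hE.1.eq ?_)
              exact eq_of_le (by omega) (inf_eq_left.1 h')
            have hge : E.1 (i - 1) ≤ C.1 i ⊓ E.1 i := by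
              refine le_inf ?_ (E.mono (by omega))
              rw [← hE.1 (i - 1) (by omega)]; exact C.mono (by omega)
            have e1 := Submodule.finrank_lt_finrank_of_lt hlt
            rw [C.finrank_eq (by omega)] at e1
            refine (Submodule.eq_of_le_of_finrank_le hge ?_).ge
            rw [E.finrank_eq (by omega)]
            omega
          have hle : C.1 i ⊓ D.1 (k - i) ≤ E.1 (i - 1) ⊓ D.1 (k - 1 - (i - 1)) := by
            refine le_inf (le_trans (le_inf inf_le_left ?_) hCE) ?_
            · rw [huniq E hE hI]
              exact inf_le_inf (C.mono (by omega)) (D.mono (by omega))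
            · rw [show k - 1 - (i - 1) = k - i by omega]; exact inf_le_right
          rw [eq_bot_iff]
          refine hle.trans ?_
          rcases Nat.eq_zero_or_pos (i - 1) with h0 | h0
          · rw [h0, E.eq_bot]; exact inf_le_left
          · exact (hI.2.1 (i - 1) h0 (by omega)).1.le
        · rw [hE.1 i hne]
          exact hI.2.2 i hi (by omega) hik
    rw [Nat.card_of_isEmpty]
    simp only [indMat, Matrix.of_apply, if_neg h, Nat.cast_zero]

/-- At `j = k + 1` the interpolation has reached opposition inside the member of dimension `k`. -/
theorem interp_self_iff {k : ℕ} (hk : k + 1 ≤ c) (C D : Chamber K V c) :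
    Interp (k + 1) (k + 1) C D ↔ Interp k 1 C D := by
  constructor
  · rintro ⟨h1, h2, -⟩
    refine ⟨fun i hi => ?_, fun i hi hi' => by omega, fun i hi _ hik => (h2 i hi (by omega)).1⟩
    rcases eq_or_lt_of_le hi with rfl | hlt
    · rcases Nat.eq_zero_or_pos k with rfl | h0
      · rw [C.eq_bot, D.eq_bot]
      · exact eq_of_le (by omega) (h2 k h0 (by omega)).2
    · exact h1 i hlt
  · rintro ⟨h1, -, h3⟩
    refine ⟨fun i hi => h1 i (by omega), fun i hi hik => ⟨?_, ?_⟩, fun i hi hi' hik => by omega⟩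
    · rcases eq_or_lt_of_le (show i ≤ k by omega) with rfl | hlt
      · rw [show i + 1 - 1 - i = 0 by omega, D.eq_bot, inf_bot_eq]
      · exact h3 i hi hi hlt
    · rw [Nat.add_sub_cancel, ← h1 k le_rfl]
      exact C.mono (by omega)

/-- The word of the longest element on `k + 1` letters describes opposition inside a common member of
dimension `k + 1`. -/
theorem longestWord_adj {k : ℕ} (hk : k + 1 ≤ c) :
    longestWord (fun i => indMat (Adj (K := K) (V := V) (c := c) i)) k =
      indMat (Interp (k + 1) 1) := by
  induction k with
  | zero =>
    ext C D
    have : Interp (0 + 1) 1 C D ↔ C = D := by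
      constructor
      · rintro ⟨h1, -, -⟩
        apply Subtype.ext
        funext i
        rcases Nat.eq_zero_or_pos i with rfl | h0
        · rw [C.eq_bot, D.eq_bot]
        · exact h1 i h0
      · rintro rfl
        exact ⟨fun _ _ => rfl, fun i hi hi' => by omega, fun i hi hi' hi'' => by omega⟩
    simp only [longestWord, indMat, this, Matrix.of_apply, Matrix.one_apply]
  | succ k ih =>
    have hrow : ∀ j, j ≤ k + 1 →
        ((List.range j).map fun i => indMat (Adj (K := K) (V := V) (c := c) (i + 1))).prod *
          indMat (Interp (k + 2) (j + 1)) = indMat (Interp (k + 2) 1) := by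
      intro j hj
      induction j with
      | zero => simp
      | succ j ihj =>
        rw [List.range_succ, List.map_append, List.prod_append, List.map_singleton,
          List.prod_singleton, mul_assoc, adj_mul_interp (by omega) (by omega) hk, ihj (by omega)]
    rw [longestWord, ih (by omega), ← hrow (k + 1) le_rfl]
    congr 1
    exact indMat_congr fun C D => (interp_self_iff hk C D).symm

/-- Opposition as a relation on the type of chambers. -/
def Opp (C D : Chamber K V c) : Prop := OppositeChambers K c C.1 D.1

theorem Opp.symm {C D : Chamber K V c} (h : Opp C D) : Opp D C := fun i hi hic => by
  have := h (c - i) (by omega) (by omega)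
  rwa [Nat.sub_sub_self (by omega), inf_comm] at this

/-- The opposition matrix is the word of the longest element in the adjacency matrices. -/
theorem opp_eq_longestWord (hc : 1 ≤ c) :
    indMat (Opp (K := K) (V := V) (c := c)) = longestWord (fun i => indMat (Adj i)) (c - 1) := by
  rw [longestWord_adj (by omega), Nat.sub_add_cancel hc]
  refine indMat_congr fun C D => ⟨fun h => ⟨fun i hi => ?_, fun i hi hi' => by omega,
    fun i hi _ hic => h i hi (by omega)⟩, fun h i hi hic => h.2.2 i hi hi (by omega)⟩
  rw [C.eq_top hi, D.eq_top hi]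

end Chamber
end Opposition

/-! ### Relations between adjacency and opposition -/

section Hecke

set_option linter.unusedSectionVars false

variable {K V : Type*} [Field K] [Fintype K] [AddCommGroup V] [Module K V]
  [FiniteDimensional K V] {c : ℕ}

theorem indMat_transpose {ι : Type*} {R : ι → ι → Prop} (h : ∀ a b, R a b → R b a) :
    (indMat R).transpose = indMat R := by
  ext a b
  have : R b a ↔ R a b := ⟨h b a, h a b⟩
  simp [indMat, this]

theorem indMat_mulVec {ι : Type*} [Fintype ι] (R : ι → ι → Prop) (f : ι → ℝ) (a : ι) :
    (indMat R).mulVec f a = ∑ b ∈ univ.filter (R a), f b := by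
  simp [Matrix.mulVec, dotProduct, indMat, Finset.sum_filter]

namespace Chamber

theorem SamePanel.refl (i : ℕ) (C : Chamber K V c) : SamePanel i C C := fun _ _ => rfl

/-- Outside the range `1, …, c - 1` the panels are single chambers. -/
theorem SamePanel.eq_of_notMem {i : ℕ} {C D : Chamber K V c} (hi : i ∉ Ico 1 c)
    (h : SamePanel i C D) : C = D := by
  refine h.eq ?_
  rw [mem_Ico, not_and_or, not_le, not_lt] at hi
  rcases hi with hi | hi
  · obtain rfl : i = 0 := by omega
    rw [C.eq_bot, D.eq_bot]
  · rw [C.eq_top hi, D.eq_top hi]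

theorem adj_add_one (i : ℕ) :
    indMat (Adj (K := K) (V := V) (c := c) i) + 1 = indMat (SamePanel i) := by
  ext C D
  rw [Matrix.add_apply, Matrix.one_apply]
  by_cases h : C = D
  · subst h
    simp [indMat, Adj, SamePanel.refl]
  · simp [indMat, Adj, h]

theorem adj_eq_zero {i : ℕ} (hi : i ∉ Ico 1 c) :
    indMat (Adj (K := K) (V := V) (c := c) i) = 0 := by
  ext C D
  simp only [indMat, Matrix.of_apply, Matrix.zero_apply, ite_eq_right_iff]
  exact fun h => absurd (h.1.eq_of_notMem hi) h.2

theorem samePanel_mul_self {i : ℕ} (hi : i ∈ Ico 1 c) :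
    indMat (SamePanel (K := K) (V := V) (c := c) i) * indMat (SamePanel i) =
      ((Fintype.card K : ℝ) + 1) • indMat (SamePanel i) := by
  rw [mem_Ico] at hi
  ext C D
  rw [indMat_mul_apply, Matrix.smul_apply, smul_eq_mul]
  by_cases h : SamePanel i C D
  · have : Nat.card {E // SamePanel i C E ∧ SamePanel i E D} = Fintype.card K + 1 := by
      rw [← card_panel C hi.1 hi.2]
      exact Nat.card_congr (Equiv.subtypeEquivRight fun E =>
        ⟨fun hE => hE.1, fun hE => ⟨hE, hE.symm.trans h⟩⟩)
    rw [this]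
    simp [indMat, h]
  · have : IsEmpty {E // SamePanel i C E ∧ SamePanel i E D} :=
      ⟨fun E => h (E.2.1.trans E.2.2)⟩
    rw [Nat.card_of_isEmpty]
    simp [indMat, h]

/-- The quadratic Hecke relation. -/
theorem adj_sq {i : ℕ} (hi : i ∈ Ico 1 c) :
    indMat (Adj (K := K) (V := V) (c := c) i) * indMat (Adj i) =
      ((Fintype.card K : ℝ) - 1) • indMat (Adj i) + (Fintype.card K : ℝ) • 1 := by
  have h := samePanel_mul_self (K := K) (V := V) hi
  rw [← adj_add_one] at h
  have e : indMat (Adj (K := K) (V := V) (c := c) i) * indMat (Adj i) =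
      (indMat (Adj i) + 1) * (indMat (Adj i) + 1) - (indMat (Adj i) + indMat (Adj i) + 1) := by
    noncomm_ring
  rw [e, h]
  module

theorem samePanel_mulVec_one {i : ℕ} (hi : i ∈ Ico 1 c) :
    (indMat (SamePanel (K := K) (V := V) (c := c) i)).mulVec (fun _ => 1) =
      fun _ => (Fintype.card K : ℝ) + 1 := by
  rw [mem_Ico] at hi
  funext C
  rw [indMat_mulVec, sum_const, nsmul_eq_mul, mul_one, ← Fintype.card_subtype,
    ← Nat.card_eq_fintype_card, card_panel C hi.1 hi.2]
  push_cast
  rfl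

theorem adj_mulVec_one {i : ℕ} (hi : i ∈ Ico 1 c) :
    (indMat (Adj (K := K) (V := V) (c := c) i)).mulVec (fun _ => 1) =
      fun _ => (Fintype.card K : ℝ) := by
  have h := samePanel_mulVec_one (K := K) (V := V) hi
  rw [← adj_add_one, Matrix.add_mulVec, Matrix.one_mulVec] at h
  funext C
  have := congrFun h C
  simp only [Pi.add_apply] at this
  linarith

/-- Almost opposition: general position except possibly between dimensions `i` and `c - i`. -/
def AlmostOpp (i : ℕ) (C D : Chamber K V c) : Prop :=
  ∀ j, 1 ≤ j → j ≤ c - 1 → j ≠ c - i → C.1 j ⊓ D.1 (c - j) = ⊥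

theorem AlmostOpp.symm {i : ℕ} (hi : i ∈ Ico 1 c) {C D : Chamber K V c} (h : AlmostOpp i C D) :
    AlmostOpp (c - i) D C := fun j h1 h2 h3 => by
  rw [mem_Ico] at hi
  have := h (c - j) (by omega) (by omega) (by omega)
  rwa [Nat.sub_sub_self (by omega), inf_comm] at this

/-- Opposition is almost opposition together with general position of `C_{c-i}` and `D_i`. -/
theorem opp_iff {i : ℕ} (hi : i ∈ Ico 1 c) (C D : Chamber K V c) :
    Opp C D ↔ AlmostOpp i C D ∧ C.1 (c - i) ⊓ D.1 i = ⊥ := by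
  rw [mem_Ico] at hi
  constructor
  · intro h
    refine ⟨fun j h1 h2 _ => h j h1 h2, ?_⟩
    have := h (c - i) (by omega) (by omega)
    rwa [Nat.sub_sub_self (by omega)] at this
  · rintro ⟨h, h'⟩ j h1 h2
    rcases eq_or_ne j (c - i) with rfl | hj
    · rwa [Nat.sub_sub_self (by omega)]
    · exact h j h1 h2 hj

theorem AlmostOpp.congr {i : ℕ} (hi : i ∈ Ico 1 c) {C D E : Chamber K V c} (h : SamePanel i D E) :
    AlmostOpp i C D ↔ AlmostOpp i C E := by
  rw [mem_Ico] at hi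
  refine forall_congr' fun j => forall_congr' fun h1 => forall_congr' fun h2 =>
    forall_congr' fun h3 => ?_
  rw [h (c - j) (by omega)]

/-- If `C` and `D` are almost opposite, the line `C_{c-i} ∩ D_{i+1}` spans with `D_{i-1}` the
`i`-dimensional member of the only chamber of the `i`-panel of `D` which is not opposite to `C`. -/
theorem card_panel_opp {i : ℕ} (hi : i ∈ Ico 1 c) {C D : Chamber K V c} (h : AlmostOpp i C D) :
    Nat.card {E // Opp C E ∧ SamePanel i E D} = Fintype.card K := by
  have hi' := mem_Ico.1 hi
  have hcV : finrank K V = c := C.finrank_space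
  -- the complements available in dimension `i - 1` and `i + 1`
  have hlow : C.1 (c - i) ⊓ D.1 (i - 1) = ⊥ := by
    rcases Nat.eq_zero_or_pos (i - 1) with h0 | h0
    · rw [h0, D.eq_bot, inf_bot_eq]
    · have := h (c - (i - 1)) (by omega) (by omega) (by omega)
      rw [Nat.sub_sub_self (by omega)] at this
      rw [eq_bot_iff, ← this]
      exact inf_le_inf (C.mono (by omega)) le_rfl
  have hL : finrank K (C.1 (c - i) ⊓ D.1 (i + 1) : Submodule K V) = 1 := by
    have e1 := Submodule.finrank_sup_add_finrank_inf_eq (C.1 (c - i)) (D.1 (i + 1))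
    rw [C.finrank_eq (by omega), D.finrank_eq (by omega)] at e1
    have e2 := Submodule.finrank_le (C.1 (c - i) ⊔ D.1 (i + 1))
    have e3 : C.1 (c - i - 1) ⊓ D.1 (i + 1) = ⊥ := by
      rcases Nat.eq_zero_or_pos (c - i - 1) with h0 | h0
      · rw [h0, C.eq_bot, bot_inf_eq]
      · have := h (c - i - 1) h0 (by omega) (by omega)
        rwa [show c - (c - i - 1) = i + 1 by omega] at this
    have e4 := Submodule.finrank_sup_add_finrank_inf_eq (C.1 (c - i - 1))
      (C.1 (c - i) ⊓ D.1 (i + 1))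
    have e5 : C.1 (c - i - 1) ⊓ (C.1 (c - i) ⊓ D.1 (i + 1)) = ⊥ := by
      rw [eq_bot_iff, ← e3]
      exact inf_le_inf le_rfl inf_le_right
    rw [e5, finrank_bot, C.finrank_eq (by omega)] at e4
    have e6 := Submodule.finrank_mono
      (sup_le (C.mono (show c - i - 1 ≤ c - i by omega))
        (inf_le_left : C.1 (c - i) ⊓ D.1 (i + 1) ≤ C.1 (c - i)))
    rw [C.finrank_eq (by omega)] at e6
    omega
  set L := C.1 (c - i) ⊓ D.1 (i + 1) with hLdef
  have hLD : finrank K (D.1 (i - 1) ⊔ L : Submodule K V) = i := by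
    have e1 := Submodule.finrank_sup_add_finrank_inf_eq (D.1 (i - 1)) L
    have e2 : D.1 (i - 1) ⊓ L = ⊥ := by
      rw [eq_bot_iff, ← hlow, hLdef]
      exact le_inf (inf_le_right.trans inf_le_left) inf_le_left
    rw [e2, finrank_bot, hL, D.finrank_eq (by omega)] at e1
    omega
  let E₀ := D.update i hi'.1 hi'.2 (D.1 (i - 1) ⊔ L) le_sup_left
    (sup_le (D.mono (by omega)) inf_le_right) hLD
  have hE₀ : E₀.1 i = D.1 (i - 1) ⊔ L := update_self _ _ _ _ _ _ _ _
  have hDE₀ : SamePanel i D E₀ := samePanel_update _ _ _ _ _ _ _ _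
  have hiff : ∀ E, (Opp C E ∧ SamePanel i E D) ↔ SamePanel i D E ∧ E ≠ E₀ := by
    intro E
    have key : SamePanel i D E → (C.1 (c - i) ⊓ E.1 i = ⊥ ↔ E ≠ E₀) := by
      intro hDE
      rw [← not_iff_not, not_not]
      constructor
      · intro hne
        -- the intersection is contained in the line `L`, hence equal to it
        have h1 : C.1 (c - i) ⊓ E.1 i ≤ L := by
          refine inf_le_inf le_rfl ?_
          rw [hDE (i + 1) (by omega)]; exact E.mono (by omega)
        have h2 : L ≤ E.1 i := by
          have : C.1 (c - i) ⊓ E.1 i = L := by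
            refine Submodule.eq_of_le_of_finrank_le h1 ?_
            rw [hL]
            have := Submodule.one_le_finrank_iff.2 hne
            exact this
          rw [← this]; exact inf_le_right
        refine (hDE.symm.trans hDE₀).eq ?_
        rw [hE₀]
        refine (Submodule.eq_of_le_of_finrank_eq (sup_le ?_ h2) ?_).symm
        · rw [hDE (i - 1) (by omega)]; exact E.mono (by omega)
        · rw [hLD, E.finrank_eq (by omega)]
      · rintro rfl hbot
        have h1 : L ≤ C.1 (c - i) ⊓ E₀.1 i := by
          rw [hE₀]
          exact le_inf inf_le_left le_sup_right
        rw [hbot, le_bot_iff] at h1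
        rw [h1, finrank_bot] at hL
        omega
    rw [opp_iff hi]
    constructor
    · rintro ⟨⟨_, h2⟩, h3⟩
      exact ⟨h3.symm, (key h3.symm).1 h2⟩
    · rintro ⟨h1, h2⟩
      exact ⟨⟨(AlmostOpp.congr hi h1).1 h, (key h1).2 h2⟩, h1.symm⟩
  have hc := card_panel D hi'.1 hi'.2
  rw [Nat.card_eq_fintype_card, Fintype.card_subtype] at hc ⊢
  have : univ.filter (fun E => Opp C E ∧ SamePanel i E D) =
      (univ.filter (fun E => SamePanel i D E)).erase E₀ := by
    ext E
    simp only [mem_filter, mem_univ, true_and, mem_erase, hiff E]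
    exact and_comm
  rw [this, card_erase_of_mem (by simpa using hDE₀), hc]
  rfl

/-- Every `i`-panel contains `q` chambers opposite to `C`, or none. -/
theorem opp_mul_samePanel {i : ℕ} (hi : i ∈ Ico 1 c) :
    indMat (Opp (K := K) (V := V) (c := c)) * indMat (SamePanel i) =
      (Fintype.card K : ℝ) • indMat (AlmostOpp i) := by
  ext C D
  rw [indMat_mul_apply, Matrix.smul_apply, smul_eq_mul]
  by_cases h : AlmostOpp i C D
  · rw [card_panel_opp hi h]
    simp [indMat, h]
  · have : IsEmpty {E // Opp C E ∧ SamePanel i E D} :=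
      ⟨fun E => h ((AlmostOpp.congr hi E.2.2).1 ((opp_iff hi _ _).1 E.2.1).1)⟩
    rw [Nat.card_of_isEmpty]
    simp [indMat, h]

theorem opp_transpose :
    (indMat (Opp (K := K) (V := V) (c := c))).transpose = indMat Opp :=
  indMat_transpose fun _ _ => Opp.symm

theorem adj_transpose (i : ℕ) :
    (indMat (Adj (K := K) (V := V) (c := c) i)).transpose = indMat (Adj i) :=
  indMat_transpose fun _ _ h => ⟨h.1.symm, h.2.symm⟩

/-- The opposition matrix carries `i`-adjacency to `(c - i)`-adjacency. The product of the opposition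
matrix with the `i`-panel relation on the right, and the product with the `(c - i)`-panel relation on the
left, are the same multiple of almost opposition. -/
theorem opp_mul_adj {i : ℕ} (hi : i ∈ Ico 1 c) :
    indMat (Opp (K := K) (V := V) (c := c)) * indMat (Adj i) =
      indMat (Adj (c - i)) * indMat Opp := by
  have hi' := mem_Ico.1 hi
  have hi2 : c - i ∈ Ico 1 c := mem_Ico.2 ⟨by omega, by omega⟩
  have h1 := opp_mul_samePanel (K := K) (V := V) hi
  have h2 := congrArg Matrix.transpose (opp_mul_samePanel (K := K) (V := V) hi2)
  rw [Matrix.transpose_mul, Matrix.transpose_smul, opp_transpose,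
    indMat_transpose (fun _ _ h => SamePanel.symm h)] at h2
  have h3 : (indMat (AlmostOpp (K := K) (V := V) (c := c) (c - i))).transpose =
      indMat (AlmostOpp i) := by
    ext C D
    have : AlmostOpp (c - i) D C ↔ AlmostOpp i C D := by
      refine ⟨fun h => ?_, fun h => h.symm hi⟩
      have := h.symm hi2
      rwa [Nat.sub_sub_self hi'.2.le] at this
    simp [indMat, this]
  rw [h3, ← h1, ← adj_add_one, ← adj_add_one, mul_add, add_mul, mul_one, one_mul] at h2
  exact (add_right_cancel h2).symm

end Chamber
end Hecke

/-! ### Connectivity of the chamber graph -/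

section Connectivity

set_option linter.unusedSectionVars false

variable {K V : Type*} [Field K] [AddCommGroup V] [Module K V]
  [FiniteDimensional K V] {c : ℕ}

namespace Chamber

theorem nonempty_of_finrank (h : finrank K V = c) : Nonempty (Chamber K V c) := by
  let b := finBasisOfFinrankEq K V h
  refine ⟨⟨fun i => Submodule.span K (b '' {j : Fin c | (j : ℕ) < i}), ?_, ?_, ?_⟩⟩
  · intro i j hij
    exact Submodule.span_mono (Set.image_mono fun k (hk : (k : ℕ) < i) => lt_of_lt_of_le hk hij)
  · intro i hi
    have hli : LinearIndepOn K id (b '' {j : Fin c | (j : ℕ) < i}) :=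
      (b.linearIndependent.linearIndepOn _).id_image
    have := finrank_span_set_eq_card (R := K) hli
    rw [this, Set.toFinset_card, Fintype.card_congr (Equiv.Set.image b _ b.injective).symm]
    have e : Fintype.card {j : Fin c | (j : ℕ) < i} = Fintype.card (Fin i) :=
      Fintype.card_congr
        { toFun := fun j => ⟨j.1, j.2⟩
          invFun := fun j => ⟨⟨j.1, by omega⟩, j.2⟩
          left_inv := fun _ => rfl
          right_inv := fun _ => rfl }
    rw [e, Fintype.card_fin]
  · intro i hi
    have : {j : Fin c | (j : ℕ) < i} = Set.univ := by
      ext j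
      simp only [Set.mem_ofPred_eq, Set.mem_univ, iff_true]
      omega
    simp only [this, Set.image_univ, b.span_eq]

/-- The chamber which runs through the chamber `G` of `X`, where `dim X = k` and `X ≤ C_{k+1}`, and
then through the members of `C` of dimension greater than `k`. -/
noncomputable def glue (C : Chamber K V c) {k : ℕ} (hk : k < c) (X : Submodule K V)
    (hX : X ≤ C.1 (k + 1)) (hd : finrank K X = k) (G : Chamber K X k) : Chamber K V c :=
  ⟨fun i => if i ≤ k then (G.1 i).map X.subtype else C.1 i, by
    refine ⟨monotone_nat_of_le_succ fun i => ?_, fun i hi => ?_, fun i hi => ?_⟩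
    · by_cases h1 : i + 1 ≤ k
      · simp only [if_pos h1, if_pos (show i ≤ k by omega)]
        exact Submodule.map_mono (G.mono (by omega))
      · rw [if_neg h1]
        by_cases h2 : i ≤ k
        · rw [if_pos h2, show i = k by omega]
          exact (Submodule.map_subtype_le _ _).trans hX
        · rw [if_neg h2]
          exact C.mono (by omega)
    · by_cases h1 : i ≤ k
      · refine (congrArg (fun Y : Submodule K V => finrank K Y) (if_pos h1)).trans ?_
        rw [Submodule.finrank_map_subtype_eq, G.finrank_eq h1]
      · refine (congrArg (fun Y : Submodule K V => finrank K Y) (if_neg h1)).trans ?_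
        rw [C.finrank_eq hi]
    · simp only [if_neg (show ¬ i ≤ k by omega)]
      exact C.eq_top hi⟩

/-- A function constant on all panels takes the same value on chambers agreeing from dimension `k`
on. -/
theorem eq_of_agree {α : Type*} (f : Chamber K V c → α)
    (hf : ∀ i ∈ Ico 1 c, ∀ C D, SamePanel i C D → f C = f D) (k : ℕ) (hk : k ≤ c)
    (C D : Chamber K V c) (h : ∀ i, k ≤ i → C.1 i = D.1 i) : f C = f D := by
  induction k generalizing C D with
  | zero => exact congrArg f (Subtype.ext (funext fun i => h i (Nat.zero_le i)))
  | succ k ih =>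
    rcases Nat.eq_zero_or_pos k with rfl | h0
    · refine ih (by omega) C D fun i _ => ?_
      rcases Nat.eq_zero_or_pos i with rfl | hi
      · rw [C.eq_bot, D.eq_bot]
      · exact h i hi
    by_cases hCD : C.1 k = D.1 k
    · refine ih (by omega) C D fun i hi => ?_
      rcases eq_or_lt_of_le hi with rfl | hlt
      · exact hCD
      · exact h i hlt
    -- both chambers can be moved to pass through `X`, after which they share a panel
    set X := C.1 k ⊓ D.1 k with hX
    obtain ⟨l, rfl⟩ : ∃ l, k = l + 1 := ⟨k - 1, by omega⟩
    have hd : finrank K X = l := by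
      have e1 := Submodule.finrank_sup_add_finrank_inf_eq (C.1 (l + 1)) (D.1 (l + 1))
      rw [C.finrank_eq (by omega), D.finrank_eq (by omega), ← hX] at e1
      have e2 := Submodule.finrank_mono (sup_le (C.mono (show l + 1 ≤ l + 1 + 1 by omega))
        ((D.mono (show l + 1 ≤ l + 1 + 1 by omega)).trans (h _ le_rfl).ge))
      rw [C.finrank_eq hk] at e2
      have e3 : X < C.1 (l + 1) := by
        refine lt_of_le_of_ne inf_le_left fun h' => hCD (eq_of_le (by omega) ?_)
        rw [← h']; exact inf_le_right
      have e4 := Submodule.finrank_lt_finrank_of_lt e3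
      rw [C.finrank_eq (by omega)] at e4
      omega
    obtain ⟨G⟩ := nonempty_of_finrank hd
    let C' := C.glue (by omega) X inf_le_left hd G
    let D' := D.glue (by omega) X inf_le_right hd G
    have hC' : ∀ i, l + 1 ≤ i → C.1 i = C'.1 i := fun i hi => by
      change _ = ite _ _ _
      rw [if_neg (by omega)]
    have hD' : ∀ i, l + 1 ≤ i → D'.1 i = D.1 i := fun i hi => by
      change ite _ _ _ = _
      rw [if_neg (by omega)]
    have hCD' : SamePanel (l + 1) C' D' := fun i hi => by
      by_cases h1 : i ≤ l
      · change ite _ _ _ = ite _ _ _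
        rw [if_pos h1, if_pos h1]
      · rw [← hC' i (by omega), hD' i (by omega), h i (by omega)]
    rw [ih (by omega) C C' hC', ih (by omega) D D' fun i hi => (hD' i hi).symm]
    exact hf (l + 1) (mem_Ico.2 ⟨by omega, by omega⟩) _ _ hCD'

/-- A function fixed up to the factor `q` by all adjacency matrices is constant on panels, hence constant
by connectivity, hence zero if its sum is zero. -/
theorem adj_fixed_eq_zero [Fintype K] (f : Chamber K V c → ℝ) (hsum : ∑ C, f C = 0)
    (hf : ∀ i ∈ Ico 1 c, (indMat (Adj i)).mulVec f = (Fintype.card K : ℝ) • f) : f = 0 := by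
  have hconst : ∀ i ∈ Ico 1 c, ∀ C D, SamePanel i C D → f C = f D := by
    intro i hi C D hCD
    have h : (indMat (SamePanel i)).mulVec f = ((Fintype.card K : ℝ) + 1) • f := by
      rw [← adj_add_one, Matrix.add_mulVec, Matrix.one_mulVec, hf i hi, add_smul, one_smul]
    have hC := congrFun h C
    have hD := congrFun h D
    have hset : univ.filter (SamePanel i C) = univ.filter (SamePanel i D) := by
      ext E
      simp only [mem_filter, mem_univ, true_and]
      exact ⟨fun hE => hCD.symm.trans hE, fun hE => hCD.trans hE⟩
    rw [indMat_mulVec] at hC hD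
    rw [hset, hD] at hC
    simp only [Pi.smul_apply, smul_eq_mul] at hC
    have hq : ((Fintype.card K : ℝ) + 1) ≠ 0 := by positivity
    exact (mul_left_cancel₀ hq hC).symm
  funext C
  have hall : ∀ D, f D = f C := fun D =>
    eq_of_agree f hconst c le_rfl D C fun i hi => by rw [C.eq_top hi, D.eq_top hi]
  rw [sum_congr rfl fun D _ => hall D, sum_const, nsmul_eq_mul] at hsum
  have : (0 : ℝ) < ((univ : Finset (Chamber K V c)).card : ℝ) := by
    exact_mod_cast card_pos.2 ⟨C, mem_univ C⟩
  exact (mul_eq_zero.1 hsum).resolve_left this.ne'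

/-- The word has `k (k + 1) / 2` letters, so constant row sums `q` multiply to `q` to that power. -/
theorem longestWord_mulVec_one {ι : Type*} [Fintype ι] [DecidableEq ι]
    (T : ℕ → Matrix ι ι ℝ) (q : ℝ) (k : ℕ)
    (hT : ∀ i ∈ Ico 1 (k + 1), (T i).mulVec (fun _ => 1) = fun _ => q) :
    (longestWord T k).mulVec (fun _ => 1) = fun _ => q ^ ((k + 1).choose 2) := by
  have hs : ∀ a b : ℝ, (∀ M : Matrix ι ι ℝ, (M.mulVec (fun _ => 1) = fun _ => a) →
      M.mulVec (fun _ => b) = fun _ => a * b) := by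
    intro a b M hM
    have : (fun _ : ι => b) = b • (fun _ => 1) := by funext; simp
    rw [this, Matrix.mulVec_smul, hM]
    funext
    simp [mul_comm]
  induction k with
  | zero => simp [longestWord]
  | succ k ih =>
    have hrow : ∀ j, j ≤ k + 1 → ∀ b : ℝ,
        (((List.range j).map fun i => T (i + 1)).prod).mulVec (fun _ => b) =
          fun _ => q ^ j * b := by
      intro j hj
      induction j with
      | zero => intro b; simp
      | succ j ihj =>
        intro b
        rw [List.range_succ, List.map_append, List.prod_append, List.map_singleton,
          List.prod_singleton, ← Matrix.mulVec_mulVec,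
          hs q b _ (hT (j + 1) (mem_Ico.2 ⟨by omega, by omega⟩)), ihj (by omega)]
        funext
        ring
    rw [longestWord, ← Matrix.mulVec_mulVec, ih fun i hi => hT i ?_, hrow (k + 1) le_rfl]
    · funext
      rw [Nat.choose_succ_succ' (k + 1) 1, Nat.choose_one_right, ← pow_add]
    · rw [mem_Ico] at hi ⊢
      omega

/-- Every chamber is opposite to `q^{c(c-1)/2}` chambers. -/
theorem card_opp [Fintype K] (C : Chamber K V c) :
    Nat.card {D // Opp C D} = Fintype.card K ^ c.choose 2 := by
  rcases Nat.eq_zero_or_pos c with rfl | hc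
  · have : Unique {D // Opp C D} :=
      { default := ⟨C, fun i hi hi' => by omega⟩
        uniq := fun D => Subtype.ext (Subtype.ext (funext fun i => by
          rw [D.1.eq_top (Nat.zero_le i)]; exact (C.eq_top (Nat.zero_le i)).symm)) }
    simp
  have h := longestWord_mulVec_one (fun i => indMat (Adj (K := K) (V := V) (c := c) i))
    (Fintype.card K) (c - 1) fun i hi => adj_mulVec_one (by rwa [Nat.sub_add_cancel hc] at hi)
  rw [← opp_eq_longestWord hc, Nat.sub_add_cancel hc] at h
  have h' := congrFun h C
  rw [indMat_mulVec, sum_const, nsmul_eq_mul, mul_one, ← Fintype.card_subtype,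
    ← Nat.card_eq_fintype_card] at h'
  exact_mod_cast h'

end Chamber
end Connectivity

/-! ### Chambers through a subspace -/

section Residues

set_option linter.unusedSectionVars false

variable {K V : Type*} [Field K] [AddCommGroup V] [Module K V]
  [FiniteDimensional K V] {c s : ℕ} {S : Submodule K V}

namespace Chamber

/-- The chamber cut out on `S` by a chamber passing through `S`. -/
def onSub (_hS : finrank K S = s) (hs : s ≤ c) (C : Chamber K V c) (h : C.1 s = S) :
    Chamber K S s :=
  ⟨fun i => (C.1 i).comap S.subtype, by
    refine ⟨fun i j hij => Submodule.comap_mono (C.mono hij), fun i hi => ?_, fun i hi => ?_⟩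
    · have hle : C.1 i ≤ S := h ▸ C.mono hi
      rw [finrank_comap_subtype, inf_eq_right.2 hle, C.finrank_eq (hi.trans hs)]
    · have hle : S ≤ C.1 i := h ▸ C.mono hi
      exact Submodule.comap_subtype_eq_top.2 hle⟩

/-- The chamber induced on `V / S` by a chamber passing through `S`. -/
def onQuot (hS : finrank K S = s) (hs : s ≤ c) (C : Chamber K V c) (h : C.1 s = S) :
    Chamber K (V ⧸ S) (c - s) :=
  ⟨fun i => (C.1 (i + s)).map S.mkQ, by
    refine ⟨fun i j hij => Submodule.map_mono (C.mono (by omega)), fun i hi => ?_, fun i hi => ?_⟩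
    · have hle : S ≤ C.1 (i + s) := h ▸ C.mono (by omega)
      have := finrank_map_mkQ hle
      rw [C.finrank_eq (by omega), hS] at this
      exact Nat.add_right_cancel this
    · dsimp only
      rw [C.eq_top (by omega), Submodule.map_top, Submodule.range_mkQ]⟩

/-- The chamber through `S` with prescribed traces on `S` and on `V / S`. -/
noncomputable def through (hS : finrank K S = s) (hs : s ≤ c) (G : Chamber K S s)
    (H : Chamber K (V ⧸ S) (c - s)) : Chamber K V c :=
  ⟨fun i => if i ≤ s then (G.1 i).map S.subtype else (H.1 (i - s)).comap S.mkQ, by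
    refine ⟨monotone_nat_of_le_succ fun i => ?_, fun i hi => ?_, fun i hi => ?_⟩
    · by_cases h1 : i + 1 ≤ s
      · simp only [if_pos h1, if_pos (show i ≤ s by omega)]
        exact Submodule.map_mono (G.mono (by omega))
      · rw [if_neg h1]
        by_cases h2 : i ≤ s
        · rw [if_pos h2]
          exact (Submodule.map_subtype_le _ _).trans (Submodule.le_comap_mkQ _ _)
        · rw [if_neg h2]
          exact Submodule.comap_mono (H.mono (by omega))
    · by_cases h1 : i ≤ s
      · refine (congrArg (fun Y : Submodule K V => finrank K Y) (if_pos h1)).trans ?_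
        rw [Submodule.finrank_map_subtype_eq, G.finrank_eq h1]
      · refine (congrArg (fun Y : Submodule K V => finrank K Y) (if_neg h1)).trans ?_
        rw [finrank_comap_mkQ, H.finrank_eq (by omega), hS]
        omega
    · by_cases h1 : i ≤ s
      · obtain rfl : i = s := by omega
        obtain rfl : i = c := by omega
        have hV : finrank K S = finrank K V := by
          have := H.finrank_space
          have := Submodule.finrank_quotient_add_finrank S
          omega
        simp only [le_refl, if_true]
        rw [G.eq_top le_rfl, Submodule.map_subtype_top, Submodule.eq_top_of_finrank_eq hV]
      · simp only [if_neg h1]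
        rw [H.eq_top (by omega), Submodule.comap_top]⟩

theorem through_of_le (hS : finrank K S = s) (hs : s ≤ c) (G : Chamber K S s)
    (H : Chamber K (V ⧸ S) (c - s)) {i : ℕ} (hi : i ≤ s) :
    (through hS hs G H).1 i = (G.1 i).map S.subtype := if_pos hi

theorem through_add (hS : finrank K S = s) (hs : s ≤ c) (G : Chamber K S s)
    (H : Chamber K (V ⧸ S) (c - s)) (i : ℕ) :
    (through hS hs G H).1 (i + s) = (H.1 i).comap S.mkQ := by
  rcases Nat.eq_zero_or_pos i with rfl | hi
  · rw [through_of_le hS hs G H (by omega), zero_add, G.eq_top le_rfl, H.eq_bot,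
      Submodule.map_subtype_top, Submodule.comap_bot, Submodule.ker_mkQ]
  · refine (if_neg (by omega)).trans ?_
    rw [Nat.add_sub_cancel]

theorem through_self (hS : finrank K S = s) (hs : s ≤ c) (G : Chamber K S s)
    (H : Chamber K (V ⧸ S) (c - s)) : (through hS hs G H).1 s = S := by
  rw [through_of_le hS hs G H le_rfl, G.eq_top le_rfl, Submodule.map_subtype_top]

/-- The chambers through `S` are the pairs of a chamber of `S` and a chamber of `V / S`. -/
noncomputable def throughEquiv (hS : finrank K S = s) (hs : s ≤ c) :
    {C : Chamber K V c // C.1 s = S} ≃ Chamber K S s × Chamber K (V ⧸ S) (c - s) where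
  toFun C := (onSub hS hs C.1 C.2, onQuot hS hs C.1 C.2)
  invFun p := ⟨through hS hs p.1 p.2, through_self hS hs _ _⟩
  left_inv := by
    rintro ⟨C, hC⟩
    apply Subtype.ext
    apply Subtype.ext
    funext i
    by_cases hi : i ≤ s
    · have hle : C.1 i ≤ S := hC ▸ C.mono hi
      rw [through_of_le hS hs _ _ hi]
      change Submodule.map S.subtype (Submodule.comap S.subtype (C.1 i)) = C.1 i
      rw [Submodule.map_comap_subtype, inf_eq_right.2 hle]
    · obtain ⟨j, rfl⟩ : ∃ j, i = j + s := ⟨i - s, by omega⟩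
      have hle : S ≤ C.1 (j + s) := hC ▸ C.mono (by omega)
      rw [through_add hS hs]
      change Submodule.comap S.mkQ (Submodule.map S.mkQ (C.1 (j + s))) = C.1 (j + s)
      rw [Submodule.comap_map_mkQ, sup_eq_right.2 hle]
  right_inv := by
    rintro ⟨G, H⟩
    refine Prod.ext (Subtype.ext (funext fun i => ?_)) (Subtype.ext (funext fun i => ?_))
    · change Submodule.comap S.subtype ((through hS hs G H).1 i) = G.1 i
      by_cases hi : i ≤ s
      · rw [through_of_le hS hs _ _ hi, Submodule.comap_map_eq_of_injective S.injective_subtype]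
      · have hle : S ≤ (through hS hs G H).1 i := by
          exact (through_self hS hs G H).ge.trans (mono _ (by omega))
        rw [G.eq_top (by omega), Submodule.comap_subtype_eq_top.2 hle]
    · change Submodule.map S.mkQ ((through hS hs G H).1 (i + s)) = H.1 i
      rw [through_add hS hs, Submodule.map_comap_eq_of_surjective S.mkQ_surjective]

theorem card_through (hS : finrank K S = s) (hs : s ≤ c) :
    Nat.card {C : Chamber K V c // C.1 s = S} =
      Nat.card (Chamber K S s) * Nat.card (Chamber K (V ⧸ S) (c - s)) := by
  rw [Nat.card_congr (throughEquiv hS hs), Nat.card_prod]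

/-- The chamber cut out on `S` by a chamber in general position to `S`. -/
def projSub (hS : finrank K S = s) (hs : s ≤ c) (C : Chamber K V c) (h : C.1 (c - s) ⊓ S = ⊥) :
    Chamber K S s :=
  ⟨fun i => (C.1 (c - s + i)).comap S.subtype, by
    refine ⟨fun i j hij => Submodule.comap_mono (C.mono (by omega)), fun i hi => ?_,
      fun i hi => ?_⟩
    · rw [finrank_comap_subtype]
      have e1 := Submodule.finrank_sup_add_finrank_inf_eq S (C.1 (c - s + i))
      have e2 := Submodule.finrank_le (S ⊔ C.1 (c - s + i))
      rw [C.finrank_space] at e2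
      rw [hS, C.finrank_eq (by omega)] at e1
      have e3 := Submodule.finrank_sup_add_finrank_inf_eq (S ⊓ C.1 (c - s + i)) (C.1 (c - s))
      have e4 : S ⊓ C.1 (c - s + i) ⊓ C.1 (c - s) = ⊥ := by
        rw [eq_bot_iff, ← h]
        exact le_inf inf_le_right (inf_le_left.trans inf_le_left)
      have e5 := Submodule.finrank_mono
        (sup_le (inf_le_right : S ⊓ C.1 (c - s + i) ≤ C.1 (c - s + i))
          (C.mono (show c - s ≤ c - s + i by omega)))
      rw [C.finrank_eq (by omega)] at e5
      rw [e4, finrank_bot, C.finrank_eq (by omega)] at e3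
      omega
    · dsimp only
      rw [C.eq_top (by omega), Submodule.comap_top]⟩

/-- The chamber induced on `V / S` by a chamber in general position to `S`. -/
def projQuot (hS : finrank K S = s) (hs : s ≤ c) (C : Chamber K V c) (h : C.1 (c - s) ⊓ S = ⊥) :
    Chamber K (V ⧸ S) (c - s) :=
  ⟨fun i => (C.1 i).map S.mkQ, by
    have hrank : ∀ i ≤ c - s, finrank K ((C.1 i).map S.mkQ) = i := fun i hi => by
      have e1 := finrank_map_add_inf_ker S.mkQ (C.1 i)
      have e2 : C.1 i ⊓ S = ⊥ := by
        rw [eq_bot_iff, ← h]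
        exact inf_le_inf (C.mono hi) le_rfl
      rwa [Submodule.ker_mkQ, e2, finrank_bot, add_zero, C.finrank_eq (by omega)] at e1
    refine ⟨fun i j hij => Submodule.map_mono (C.mono hij), hrank, fun i hi => ?_⟩
    refine top_unique (le_trans (ge_of_eq ?_) (Submodule.map_mono (C.mono hi)))
    refine Submodule.eq_top_of_finrank_eq ?_
    have := Submodule.finrank_quotient_add_finrank S
    rw [C.finrank_space] at this
    rw [hrank _ le_rfl]
    omega⟩

/-- For chambers `C` in general position to `S` and `D` through `S`, opposition can be tested
on `S` and on `V / S`. -/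
theorem opp_iff_proj (hS : finrank K S = s) (hs : s ≤ c) (C D : Chamber K V c)
    (hC : C.1 (c - s) ⊓ S = ⊥) (hD : D.1 s = S) :
    Opp C D ↔ Opp (projSub hS hs C hC) (onSub hS hs D hD) ∧
      Opp (projQuot hS hs C hC) (onQuot hS hs D hD) := by
  have hsub : ∀ j, 1 ≤ j → j ≤ s - 1 →
      ((C.1 (c - s + j)).comap S.subtype ⊓ (D.1 (s - j)).comap S.subtype = ⊥ ↔
        C.1 (c - s + j) ⊓ D.1 (s - j) = ⊥) := by
    intro j h1 h2
    have hle : C.1 (c - s + j) ⊓ D.1 (s - j) ≤ S := by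
      rw [← hD]; exact inf_le_right.trans (D.mono (by omega))
    rw [← Submodule.comap_inf, ← Submodule.finrank_eq_zero (R := K), finrank_comap_subtype,
      inf_eq_right.2 hle, Submodule.finrank_eq_zero]
  have hquot : ∀ j, 1 ≤ j → j ≤ c - s - 1 →
      ((C.1 j).map S.mkQ ⊓ (D.1 (c - s - j + s)).map S.mkQ = ⊥ ↔
        C.1 j ⊓ D.1 (c - j) = ⊥) := by
    intro j h1 h2
    rw [show c - s - j + s = c - j by omega]
    have hle : S ≤ D.1 (c - j) := hD ▸ D.mono (by omega)
    have hdis : C.1 j ⊓ S = ⊥ := by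
      rw [eq_bot_iff, ← hC]
      exact inf_le_inf (C.mono (by omega)) le_rfl
    constructor
    · intro h
      rw [eq_bot_iff, ← hdis]
      refine le_inf inf_le_left fun v hv => ?_
      have : S.mkQ v ∈ (C.1 j).map S.mkQ ⊓ (D.1 (c - j)).map S.mkQ :=
        ⟨Submodule.mem_map_of_mem hv.1, Submodule.mem_map_of_mem hv.2⟩
      rw [h, Submodule.mem_bot] at this
      rwa [← S.ker_mkQ]
    · intro h
      rw [eq_bot_iff]
      rintro _ ⟨⟨v, hv, rfl⟩, ⟨w, hw, hwv⟩⟩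
      have hvD : v ∈ D.1 (c - j) := by
        have : S.mkQ (w - v) = 0 := by rw [map_sub, hwv, sub_self]
        rw [← LinearMap.mem_ker, S.ker_mkQ] at this
        have h' := Submodule.sub_mem _ hw (hle this)
        rwa [sub_sub_cancel] at h'
      have : v ∈ C.1 j ⊓ D.1 (c - j) := ⟨hv, hvD⟩
      rw [h, Submodule.mem_bot] at this
      rw [this, map_zero]
      exact Submodule.zero_mem _
  constructor
  · intro h
    refine ⟨fun j h1 h2 => (hsub j h1 h2).2 ?_, fun j h1 h2 => (hquot j h1 h2).2 ?_⟩
    · have := h (c - s + j) (by omega) (by omega)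
      rwa [show c - (c - s + j) = s - j by omega] at this
    · exact h j h1 (by omega)
  · rintro ⟨h1, h2⟩ i hi hic
    rcases lt_trichotomy i (c - s) with hlt | rfl | hlt
    · exact (hquot i hi (by omega)).1 (h2 i hi (by omega))
    · rw [Nat.sub_sub_self hs, hD, hC]
    · have := (hsub (i - (c - s)) (by omega) (by omega)).1 (h1 _ (by omega) (by omega))
      rwa [show c - s + (i - (c - s)) = i by omega,
        show s - (i - (c - s)) = c - i by omega] at this

/-- A chamber in general position to `S` is opposite to `q^{s(s-1)/2 + (c-s)(c-s-1)/2}` chambers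
through `S`. -/
theorem card_through_opp [Fintype K] (hS : finrank K S = s) (hs : s ≤ c) (C : Chamber K V c)
    (hC : C.1 (c - s) ⊓ S = ⊥) :
    Nat.card {D : Chamber K V c // D.1 s = S ∧ Opp C D} =
      Fintype.card K ^ (s.choose 2 + (c - s).choose 2) := by
  rw [pow_add, ← card_opp (projSub hS hs C hC), ← card_opp (projQuot hS hs C hC), ← Nat.card_prod]
  refine Nat.card_congr ((Equiv.subtypeSubtypeEquivSubtypeInter (fun D : Chamber K V c => D.1 s = S)
    (fun D => Opp C D)).symm.trans
    (((throughEquiv hS hs).subtypeEquiv (q := fun p => Opp (projSub hS hs C hC) p.1 ∧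
      Opp (projQuot hS hs C hC) p.2) fun D => ?_).trans Equiv.subtypeProdEquivProd))
  exact opp_iff_proj hS hs C D.1 hC D.2

theorem inf_eq_bot_of_opp (h0 : 0 < s) (hs : s < c) {C D : Chamber K V c} (h : Opp C D)
    (hD : D.1 s = S) : C.1 (c - s) ⊓ S = ⊥ := by
  have := h (c - s) (by omega) (by omega)
  rwa [Nat.sub_sub_self hs.le, hD] at this

theorem card_lines [Fintype K] (h : finrank K V = c) :
    Nat.card {L : Submodule K V // finrank K L = 1} * (Fintype.card K - 1) =
      Fintype.card K ^ c - 1 := by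
  have : Finite V := Module.finite_of_finite K
  rw [← Nat.card_congr (Projectivization.equivSubmodule K V), ← Nat.card_eq_fintype_card,
    ← Projectivization.card, Module.natCard_eq_pow_finrank (K := K), h]

theorem unique_of_finrank_le_one (hc : c ≤ 1) (C D : Chamber K V c) : C = D := by
  apply Subtype.ext
  funext i
  rcases Nat.eq_zero_or_pos i with rfl | hi
  · rw [C.eq_bot, D.eq_bot]
  · rw [C.eq_top (by omega), D.eq_top (by omega)]

theorem card_eq_one (hc : c ≤ 1) (h : finrank K V = c) : Nat.card (Chamber K V c) = 1 := by
  obtain ⟨C⟩ := nonempty_of_finrank h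
  exact Nat.card_eq_one_iff_unique.2 ⟨⟨unique_of_finrank_le_one hc⟩, ⟨C⟩⟩

/-- The number of chambers, counted by their one-dimensional members. -/
theorem card_mul [Fintype K] (h : finrank K V = c) :
    Nat.card (Chamber K V c) * (Fintype.card K - 1) ^ c =
      ∏ i ∈ Icc 1 c, (Fintype.card K ^ i - 1) := by
  induction c generalizing V with
  | zero => rw [card_eq_one zero_le_one h]; simp
  | succ c ih =>
    have : Finite V := Module.finite_of_finite K
    have : Finite (Submodule K V) := inferInstance
    have : Fintype {L : Submodule K V // finrank K L = 1} := Fintype.ofFinite _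
    let e : Chamber K V (c + 1) → {L : Submodule K V // finrank K L = 1} :=
      fun C => ⟨C.1 1, C.finrank_eq (by omega)⟩
    have hfib : ∀ L : {L : Submodule K V // finrank K L = 1},
        Nat.card {C : Chamber K V (c + 1) // e C = L} * (Fintype.card K - 1) ^ c =
          ∏ i ∈ Icc 1 c, (Fintype.card K ^ i - 1) := by
      intro L
      have h1 := Submodule.finrank_quotient_add_finrank L.1
      rw [h, L.2] at h1
      have h2 := ih (V := V ⧸ L.1) (by omega)
      rw [Nat.card_congr (Equiv.subtypeEquivRight fun C => Subtype.ext_iff),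
        card_through L.2 (by omega), card_eq_one le_rfl L.2, one_mul]
      exact h2
    rw [← Nat.card_congr (Equiv.sigmaFiberEquiv e), Nat.card_sigma, pow_succ, ← mul_assoc, sum_mul,
      sum_congr rfl fun L _ => hfib L, sum_const, smul_eq_mul, card_univ,
      ← Nat.card_eq_fintype_card, prod_Icc_succ_top (by omega), ← card_lines h]
    ring

theorem zNat_eq_card [Fintype K] (h : finrank K V = c) :
    zNat (Fintype.card K) c = Nat.card (Chamber K V c) := by
  have hq : 1 < Fintype.card K := Fintype.one_lt_card
  rw [zNat, ← card_mul h]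
  exact Nat.mul_div_cancel _ (Nat.pow_pos (by omega))

theorem card_through_eq [Fintype K] (hV : finrank K V = c) (hS : finrank K S = s) (hs : s ≤ c) :
    Nat.card {C : Chamber K V c // C.1 s = S} =
      zNat (Fintype.card K) s * zNat (Fintype.card K) (c - s) := by
  have h1 := Submodule.finrank_quotient_add_finrank S
  rw [card_through hS hs, zNat_eq_card hS, zNat_eq_card (V := V ⧸ S) (by omega)]

end Chamber
end Residues

/-! ### The ratio bound with equality, and double counting -/

section Counting

/-- The equality case of the ratio bound: if a symmetric matrix with constant row sum `μ Q` has
norm at most `μ` on the vectors of sum zero, then the indicator vector `g` of an independent set of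
density `1 / (Q + 1)` satisfies `A g = μ (1 - g)`. -/
theorem mulVec_eq_of_tight {ι : Type*} [Fintype ι] (A : Matrix ι ι ℝ) (hA : A.transpose = A)
    (μ Q a : ℝ) (hQ : 0 < Q) (g : ι → ℝ)
    (h1 : A.mulVec (fun _ => 1) = fun _ => μ * Q) (hgg : g ⬝ᵥ g = a) (hg1 : g ⬝ᵥ 1 = a)
    (hN : (1 : ι → ℝ) ⬝ᵥ 1 = a * (Q + 1)) (hgA : g ⬝ᵥ A.mulVec g = 0)
    (hbound : ∀ f : ι → ℝ, ∑ c, f c = 0 → A.mulVec f ⬝ᵥ A.mulVec f ≤ μ ^ 2 * (f ⬝ᵥ f)) :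
    A.mulVec g = μ • (1 - g) := by
  have h1' : A.mulVec 1 = (μ * Q) • 1 := by
    refine Eq.trans h1 ?_
    funext
    simp
  have h1g : 1 ⬝ᵥ A.mulVec g = μ * Q * a := by
    rw [Matrix.dotProduct_mulVec, ← hA, Matrix.vecMul_transpose, h1', smul_dotProduct,
      dotProduct_comm, hg1, smul_eq_mul]
  set f : ι → ℝ := (Q + 1) • g - 1 with hf
  have hAf : A.mulVec f = (Q + 1) • A.mulVec g - (μ * Q) • 1 := by
    rw [hf, Matrix.mulVec_sub, Matrix.mulVec_smul, h1']
  have hsum : ∑ c, f c = 0 := by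
    have : ∑ c, f c = f ⬝ᵥ 1 := by simp [dotProduct]
    rw [this, hf, sub_dotProduct, smul_dotProduct, hg1, hN, smul_eq_mul]
    ring
  have hff : f ⬝ᵥ f = (Q + 1) * Q * a := by
    rw [hf]
    simp only [sub_dotProduct, dotProduct_sub, smul_dotProduct, dotProduct_smul, smul_eq_mul]
    rw [hgg, dotProduct_comm 1 g, hg1, hN]
    ring
  have hfAf : f ⬝ᵥ A.mulVec f = -((Q + 1) * Q * a * μ) := by
    rw [hAf, hf]
    simp only [sub_dotProduct, dotProduct_sub, smul_dotProduct, dotProduct_smul, smul_eq_mul]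
    rw [hgA, h1g, hg1, hN]
    ring
  have hle : (A.mulVec f + μ • f) ⬝ᵥ (A.mulVec f + μ • f) ≤ 0 := by
    have hb := hbound f hsum
    simp only [add_dotProduct, dotProduct_add, smul_dotProduct, dotProduct_smul, smul_eq_mul]
    rw [dotProduct_comm (A.mulVec f) f, hfAf]
    rw [hff] at hb ⊢
    linarith
  have hzero : A.mulVec f + μ • f = 0 := by
    refine dotProduct_self_eq_zero.1 (le_antisymm hle ?_)
    exact Finset.sum_nonneg fun i _ => mul_self_nonneg _
  funext i
  have hi := congrFun hzero i
  rw [hAf, hf] at hi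
  simp only [Pi.add_apply, Pi.sub_apply, Pi.smul_apply, smul_eq_mul, Pi.one_apply,
    Pi.zero_apply] at hi ⊢
  have hQ1 : Q + 1 ≠ 0 := by positivity
  refine mul_left_cancel₀ hQ1 ?_
  linear_combination hi

variable {K V : Type*} [Field K] [Fintype K] [AddCommGroup V] [Module K V]
  [FiniteDimensional K V]

namespace Chamber

/-- On the vectors of sum zero the opposition matrix has norm at most `q^{m(m-2)/2}`. -/
theorem opp_norm_le {m : ℕ} (hm : 2 ≤ m) (f : Chamber K V m → ℝ) (hf : ∑ C, f C = 0) :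
    (indMat Opp).mulVec f ⬝ᵥ (indMat Opp).mulVec f ≤
      (Fintype.card K : ℝ) ^ (m * (m - 2)) * (f ⬝ᵥ f) :=
  dotProduct_mulVec_le_of_hecke (Fintype.card K : ℝ)
    (by exact_mod_cast (Fintype.one_lt_card : 1 < Fintype.card K)) m hm
    (fun i => indMat (Adj i)) (indMat Opp) adj_transpose opp_transpose
    (fun _ hi => adj_eq_zero hi) (fun _ hi => adj_sq hi) (fun _ hi => adj_mulVec_one hi)
    (opp_eq_longestWord (by omega)) (fun _ hi => opp_mul_adj hi)
    (fun f h0 h1 => adj_fixed_eq_zero f h0 h1) f hf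

/-- A maximum EKR-set has the property that every chamber outside it is opposite to the same number
`q^{2n(n-1)}` of its members. -/
theorem card_opp_of_max {n : ℕ} (hn : 1 ≤ n) (F : Set (Chamber K V (2 * n)))
    (hFind : ∀ C ∈ F, ∀ D ∈ F, ¬ Opp C D)
    (hFmax : Nat.card F * (Fintype.card K ^ n + 1) = Nat.card (Chamber K V (2 * n)))
    (D : Chamber K V (2 * n)) :
    Nat.card {C // C ∈ F ∧ Opp D C} = if D ∈ F then 0 else Fintype.card K ^ (2 * n * (n - 1)) := by
  set q := Fintype.card K with hq
  have hq1 : 1 < q := Fintype.one_lt_card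
  have hind : ∀ R : Chamber K V (2 * n) → Prop,
      ∑ C, (if R C then (1 : ℝ) else 0) = Nat.card {C // R C} := by
    intro R
    rw [Nat.card_eq_fintype_card, Fintype.card_subtype, Finset.card_filter]
    push_cast
    rfl
  set g : Chamber K V (2 * n) → ℝ := fun C => if C ∈ F then 1 else 0 with hg
  have hAg : ∀ D, (indMat Opp).mulVec g D = Nat.card {C // C ∈ F ∧ Opp D C} := by
    intro D
    rw [← hind, indMat_mulVec, Finset.sum_filter]
    refine sum_congr rfl fun C _ => ?_
    by_cases h1 : C ∈ F <;> by_cases h2 : Opp D C <;> simp [hg, h1, h2]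
  have hcard : ∑ C, g C = Nat.card F := hind _
  have key := mulVec_eq_of_tight (indMat (Opp (K := K) (V := V) (c := 2 * n))) opp_transpose
    ((q : ℝ) ^ (2 * n * (n - 1))) ((q : ℝ) ^ n) (Nat.card F) (by positivity) g
    ?_ ?_ ?_ ?_ ?_ ?_
  · have hD := congrFun key D
    rw [hAg] at hD
    simp only [Pi.smul_apply, Pi.sub_apply, Pi.one_apply, smul_eq_mul, hg] at hD
    split_ifs at hD ⊢ with h
    · rw [sub_self, mul_zero] at hD
      exact_mod_cast hD
    · rw [sub_zero, mul_one] at hD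
      exact_mod_cast hD
  · funext C
    rw [indMat_mulVec, sum_const, nsmul_eq_mul, mul_one, ← Fintype.card_subtype,
      ← Nat.card_eq_fintype_card, card_opp, ← pow_add]
    have : (2 * n).choose 2 = 2 * n * (n - 1) + n := by
      rw [Nat.choose_two_right]
      obtain ⟨k, rfl⟩ : ∃ k, n = k + 1 := ⟨n - 1, by omega⟩
      rw [show 2 * (k + 1) - 1 = 2 * k + 1 by omega, show k + 1 - 1 = k by omega]
      refine Nat.div_eq_of_eq_mul_left two_pos ?_
      ring
    rw [this]
    push_cast
    rfl
  · rw [← hcard]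
    refine sum_congr rfl fun C _ => ?_
    by_cases h : C ∈ F <;> simp [hg, h]
  · rw [← hcard]
    simp [dotProduct]
  · have : (1 : Chamber K V (2 * n) → ℝ) ⬝ᵥ 1 = Nat.card (Chamber K V (2 * n)) := by
      simp [dotProduct, Nat.card_eq_fintype_card]
    rw [this, ← hFmax]
    push_cast
    rfl
  · refine sum_eq_zero fun C _ => ?_
    by_cases h : C ∈ F
    · have : IsEmpty {D // D ∈ F ∧ Opp C D} := ⟨fun D => hFind C h D.1 D.2.1 D.2.2⟩
      rw [hAg, Nat.card_of_isEmpty, Nat.cast_zero, mul_zero]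
    · simp [hg, h]
  · intro f hf
    refine (opp_norm_le (by omega) f hf).trans (le_of_eq ?_)
    rw [← pow_mul]
    congr 2
    obtain ⟨k, rfl⟩ : ∃ k, n = k + 1 := ⟨n - 1, by omega⟩
    rw [show 2 * (k + 1) - 2 = 2 * k by omega, show k + 1 - 1 = k by omega]
    ring

theorem two_mul_choose_two (k : ℕ) : 2 * k.choose 2 + k = k ^ 2 := by
  induction k with
  | zero => rfl
  | succ k ih =>
    rw [Nat.choose_succ_succ' k 1, Nat.choose_one_right]
    linarith [ih, add_sq k 1]

theorem natCard_eq_filter {ι : Type*} [Fintype ι] (p : ι → Prop) [DecidablePred p] :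
    Nat.card {x // p x} = (univ.filter p).card := by
  rw [Nat.card_eq_fintype_card, Fintype.card_subtype]

theorem sum_card_comm {ι : Type*} [Fintype ι] (P Q : ι → Prop) (R : ι → ι → Prop) :
    ∑ D ∈ univ.filter P, Nat.card {C // Q C ∧ R D C} =
      ∑ C ∈ univ.filter Q, Nat.card {D // P D ∧ R D C} := by
  have key := sum_card_bipartiteAbove_eq_sum_card_bipartiteBelow (s := univ.filter P)
    (t := univ.filter Q) R
  simp only [bipartiteAbove, bipartiteBelow, filter_filter] at key
  simp only [natCard_eq_filter]
  convert key

/-- Double counting of the opposite pairs of a member of `F` and a chamber through `S`. -/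
theorem double_count {n s : ℕ} (hs0 : 0 < s) (hs2n : s < 2 * n) (hV : finrank K V = 2 * n)
    (F : Set (Chamber K V (2 * n))) (hFind : ∀ C ∈ F, ∀ D ∈ F, ¬ Opp C D)
    (hFmax : Nat.card F * (Fintype.card K ^ n + 1) = Nat.card (Chamber K V (2 * n)))
    (S : Submodule K V) (hS : finrank K S = s) :
    Nat.card {C : Chamber K V (2 * n) // C ∈ F ∧ S ⊓ C.1 (2 * n - s) = ⊥} *
        Fintype.card K ^ (s.choose 2 + (2 * n - s).choose 2) =
      Fintype.card K ^ (2 * n * (n - 1)) *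
        (zNat (Fintype.card K) s * zNat (Fintype.card K) (2 * n - s) -
          Nat.card {C : Chamber K V (2 * n) // C ∈ F ∧ C.1 s = S}) := by
  have hcomm := sum_card_comm (fun D : Chamber K V (2 * n) => D.1 s = S) (fun C => C ∈ F) Opp
  rw [sum_congr rfl fun D _ => card_opp_of_max (by omega) F hFind hFmax D] at hcomm
  have hright : ∀ C ∈ univ.filter (fun C : Chamber K V (2 * n) => C ∈ F),
      Nat.card {D : Chamber K V (2 * n) // D.1 s = S ∧ Opp D C} =
        if S ⊓ C.1 (2 * n - s) = ⊥ then
          Fintype.card K ^ (s.choose 2 + (2 * n - s).choose 2) else 0 := by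
    intro C _
    split_ifs with hC
    · rw [← card_through_opp hS hs2n.le C (by rwa [inf_comm])]
      exact Nat.card_congr (Equiv.subtypeEquivRight fun D =>
        and_congr_right fun _ => ⟨Opp.symm, Opp.symm⟩)
    · have : IsEmpty {D : Chamber K V (2 * n) // D.1 s = S ∧ Opp D C} :=
        ⟨fun D => hC (by rw [inf_comm]; exact inf_eq_bot_of_opp hs0 hs2n D.2.2.symm D.2.1)⟩
      exact Nat.card_of_isEmpty
  rw [sum_congr rfl hright, ← sum_filter, sum_const, filter_filter, smul_eq_mul,
    ← natCard_eq_filter] at hcomm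
  rw [← hcomm, ← card_through_eq hV hS hs2n.le, natCard_eq_filter, natCard_eq_filter]
  have hsplit : (univ.filter fun D : Chamber K V (2 * n) => D.1 s = S).card =
      (univ.filter fun D : Chamber K V (2 * n) => D ∈ F ∧ D.1 s = S).card +
        ((univ.filter fun D : Chamber K V (2 * n) => D.1 s = S).filter fun D => D ∉ F).card := by
    rw [← card_filter_add_card_filter_not (s := univ.filter fun D : Chamber K V (2 * n) => D.1 s = S)
      (fun D => D ∈ F), filter_filter, filter_filter]
    simp only [and_comm]
  rw [hsplit, Nat.add_sub_cancel_left, sum_ite, sum_const_zero, zero_add, sum_const, smul_eq_mul,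
    mul_comm]
  congr!

end Chamber
end Counting

/-! ### The counting lemma -/

/-- for a maximum EKR-set `𝓕` of chambers of `𝔽_q^{2n}` and an `s`-subspace `S`
(`0 < s < 2n`), with `x` the number of `𝓕`-chambers with `C_s = S` and `y` the number with
`C_{2n-s} ∩ S = 0`: `y = q^{s(2n-s)-n}(z_s z_{2n-s} - x)`, `x ≤ z_s z_{2n-s}`, and if
`x < z_s z_{2n-s}` then `x ≤ z_s z_{2n-s} - q^{2n²-2ns-n+s²}`. -/
theorem key_counting_lemma (q n s : ℕ) (hs0 : 0 < s) (hs2n : s < 2 * n)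
    (K V : Type*) [Field K] [Fintype K]
    [AddCommGroup V] [Module K V] [FiniteDimensional K V]
    (hK : Fintype.card K = q) (hV : Module.finrank K V = 2 * n)
    (F : Set (Chamber K V (2 * n)))
    (hFind : ∀ C ∈ F, ∀ D ∈ F, ¬ OppositeChambers K (2 * n) C.1 D.1)
    (hFmax : Nat.card F * (q ^ n + 1) = Nat.card (Chamber K V (2 * n)))
    (S : Submodule K V) (hSdim : Module.finrank K S = s)
    (x y : ℕ)
    (hx : x = Nat.card {C : Chamber K V (2 * n) // C ∈ F ∧ C.1 s = S})
    (hy : y = Nat.card {C : Chamber K V (2 * n) // C ∈ F ∧ S ⊓ C.1 (2 * n - s) = ⊥}) :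
    y = q ^ (s * (2 * n - s) - n) * (zNat q s * zNat q (2 * n - s) - x) ∧
      x ≤ zNat q s * zNat q (2 * n - s) ∧
      (x < zNat q s * zNat q (2 * n - s) →
        x ≤ zNat q s * zNat q (2 * n - s) - q ^ (2 * n ^ 2 + s ^ 2 - (2 * n * s + n))) := by
  subst hK hx hy
  have hFind' : ∀ C ∈ F, ∀ D ∈ F, ¬ Chamber.Opp C D := hFind
  have hdc := Chamber.double_count hs0 hs2n hV F hFind' hFmax S hSdim
  have hZ := Chamber.card_through_eq hV hSdim hs2n.le
  have hq : 1 < Fintype.card K := Fintype.one_lt_card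
  -- the relations between the exponents, from `s + (2n - s) = 2n`
  obtain ⟨t, ht⟩ : ∃ t, 2 * n = s + t := ⟨2 * n - s, by omega⟩
  have hts : 2 * n - s = t := by omega
  have e1 := Chamber.two_mul_choose_two s
  have e2 := Chamber.two_mul_choose_two t
  have hn : n ≤ s * t := by
    obtain ⟨a, rfl⟩ : ∃ a, s = a + 1 := ⟨s - 1, by omega⟩
    obtain ⟨b, rfl⟩ : ∃ b, t = b + 1 := ⟨t - 1, by omega⟩
    nlinarith [Nat.zero_le (a * b)]
  have hexp : 2 * n * (n - 1) = s.choose 2 + t.choose 2 + (s * t - n) := by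
    zify [hn, show 1 ≤ n by omega] at e1 e2 ht ⊢
    have : (t : ℤ) = 2 * n - s := by linarith
    rw [this] at e2 ⊢
    linarith
  have hexp' : 2 * n ^ 2 + s ^ 2 - (2 * n * s + n) = s.choose 2 + t.choose 2 := by
    have : 2 * n ^ 2 + s ^ 2 = s.choose 2 + t.choose 2 + (2 * n * s + n) := by
      zify at e1 e2 ht ⊢
      have ht' : (t : ℤ) = 2 * n - s := by linarith
      rw [ht'] at e2
      linarith
    omega
  rw [hts] at hdc hZ ⊢
  rw [hexp']
  set e := s.choose 2 + t.choose 2 with he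
  have hy : Nat.card {C : Chamber K V (2 * n) // C ∈ F ∧ S ⊓ C.1 t = ⊥} =
      Fintype.card K ^ (s * t - n) * (zNat (Fintype.card K) s * zNat (Fintype.card K) t -
        Nat.card {C : Chamber K V (2 * n) // C ∈ F ∧ C.1 s = S}) := by
    rw [hexp, pow_add _ e] at hdc
    refine Nat.eq_of_mul_eq_mul_right (Nat.pow_pos (n := e) (show 0 < Fintype.card K by omega)) ?_
    rw [hdc]
    ring
  refine ⟨hy, ?_, fun hlt => ?_⟩
  · rw [← hZ, Chamber.natCard_eq_filter, Chamber.natCard_eq_filter]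
    exact Finset.card_le_card fun C hC => by simp_all
  · -- a member of `F` in general position to `S` is opposite to `q ^ e` chambers through `S`
    have hypos : 0 < Nat.card {C : Chamber K V (2 * n) // C ∈ F ∧ S ⊓ C.1 t = ⊥} := by
      rw [hy]
      exact Nat.mul_pos (Nat.pow_pos (by omega)) (by omega)
    obtain ⟨⟨⟨C, hCF, hCS⟩⟩, -⟩ := Nat.card_pos_iff.1 hypos
    have hcount := Chamber.card_through_opp hSdim hs2n.le C (by rw [hts, inf_comm]; exact hCS)
    rw [hts, ← he] at hcount
    refine Nat.le_sub_of_add_le ?_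
    rw [← hcount, ← hZ, Chamber.natCard_eq_filter, Chamber.natCard_eq_filter,
      Chamber.natCard_eq_filter, ← Finset.card_union_of_disjoint]
    · refine Finset.card_le_card fun D hD => ?_
      simp only [Finset.mem_union, Finset.mem_filter, Finset.mem_univ, true_and] at hD ⊢
      rcases hD with hD | hD
      · exact hD.2
      · exact hD.1
    · refine Finset.disjoint_left.2 fun D hD hD' => ?_
      simp only [Finset.mem_filter, Finset.mem_univ, true_and] at hD hD'
      exact hFind' C hCF D hD.1 hD'.2
end
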